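/- Let P be a proper real-rational n×n transfer matrix that is negative imaginary (NI) with no poles at the origin, and let C be strictly negative imaginary (SNI). Then the positive feedback interconnection [P,C] is stable if and only if: (a) I − P(∞)C(∞) is nonsingular; (b) the largest eigenvalue of (P(0)C(∞) − I)(I − P(∞)C(∞))^{-1} is negative; and (c) the largest eigenvalue of (C(0)P(0) − I)(I − C(∞)P(0))^{-1} is negative. -/

import Mathlib

open Matrix Polynomial Filter Topology
open scoped ComplexOrder

noncomputable section

namespace NIControl

/-- Evaluate a real-rational function at a complex point (junk value at poles). -/
def evalC (f : RatFunc ℝ) (s : ℂ) : ℂ :=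
  f.eval (algebraMap ℝ ℂ) s

/-- `s` is a pole of the real-rational function `f`
(the reduced denominator vanishes at `s`). -/
def IsPoleAt (f : RatFunc ℝ) (s : ℂ) : Prop :=
  f.denom.eval₂ (algebraMap ℝ ℂ) s = 0

variable {n : ℕ}

/-- Pointwise evaluation of a real-rational transfer matrix at a complex point. -/
def evalM (G : Matrix (Fin n) (Fin n) (RatFunc ℝ)) (s : ℂ) : Matrix (Fin n) (Fin n) ℂ :=
  Matrix.of fun i j => evalC (G i j) s

/-- Pointwise evaluation of a real-rational transfer matrix at a real point. -/
def evalR (G : Matrix (Fin n) (Fin n) (RatFunc ℝ)) (x : ℝ) : Matrix (Fin n) (Fin n) ℝ :=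
  Matrix.of fun i j => (G i j).eval (RingHom.id ℝ) x

/-- Value at `s = ∞` of a proper real-rational function. -/
def atInfinity (f : RatFunc ℝ) : ℝ :=
  if f.num.degree = f.denom.degree then f.num.leadingCoeff / f.denom.leadingCoeff else 0

/-- The instantaneous gain `G(∞)` of a proper real-rational transfer matrix. -/
def evalInf (G : Matrix (Fin n) (Fin n) (RatFunc ℝ)) : Matrix (Fin n) (Fin n) ℝ :=
  Matrix.of fun i j => atInfinity (G i j)

/-- The matrix `G` has a pole at `s`. -/
def HasPole (G : Matrix (Fin n) (Fin n) (RatFunc ℝ)) (s : ℂ) : Prop :=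
  ∃ i j, IsPoleAt (G i j) s

/-- All entries of `G` are proper rational functions. -/
def Proper (G : Matrix (Fin n) (Fin n) (RatFunc ℝ)) : Prop :=
  ∀ i j, (G i j).num.degree ≤ (G i j).denom.degree

/-- All entries of `G` are strictly proper rational functions. -/
def StrictlyProper (G : Matrix (Fin n) (Fin n) (RatFunc ℝ)) : Prop :=
  ∀ i j, (G i j).num.degree < (G i j).denom.degree

/-- The pole of `G` at the origin (if any) is at most simple. -/
def NoDoubleOriginPole (G : Matrix (Fin n) (Fin n) (RatFunc ℝ)) : Prop :=
  ∀ i j, (G i j).denom.rootMultiplicity 0 ≤ 1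

/-- Membership in `RH∞`: proper and no poles in the closed right-half complex plane. -/
def MemRHinf {m : Type*} [Fintype m] (G : Matrix m m (RatFunc ℝ)) : Prop :=
  (∀ i j, (G i j).num.degree ≤ (G i j).denom.degree) ∧
  ∀ s : ℂ, 0 ≤ s.re → ∀ i j, ¬ IsPoleAt (G i j) s

/-- The point `jω` on the imaginary axis. -/
def jw (ω : ℝ) : ℂ := Complex.I * (ω : ℂ)

/-- The negative-imaginary frequency kernel `j (M − M*)`. -/
def niKer (M : Matrix (Fin n) (Fin n) ℂ) : Matrix (Fin n) (Fin n) ℂ :=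
  Complex.I • (M - Mᴴ)

/-- Negative imaginary (NI) real-rational transfer matrix. -/
def IsNI (G : Matrix (Fin n) (Fin n) (RatFunc ℝ)) : Prop :=
  Proper G ∧
  (∀ s : ℂ, 0 < s.re → ¬ HasPole G s) ∧
  (∀ ω : ℝ, 0 < ω → ¬ HasPole G (jw ω) → (niKer (evalM G (jw ω))).PosSemidef) ∧
  (∀ ω : ℝ, 0 < ω → HasPole G (jw ω) →
    ∃ R : Matrix (Fin n) (Fin n) ℂ, R.PosSemidef ∧
      Tendsto (fun s : ℂ => (s - jw ω) • Complex.I • evalM G s) (𝓝[≠] jw ω) (𝓝 R)) ∧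
  (HasPole G 0 →
    (∀ k : ℕ, 3 ≤ k → Tendsto (fun s : ℂ => s ^ k • evalM G s) (𝓝[≠] 0) (𝓝 0)) ∧
    ∃ R : Matrix (Fin n) (Fin n) ℂ, R.PosSemidef ∧
      Tendsto (fun s : ℂ => s ^ 2 • evalM G s) (𝓝[≠] 0) (𝓝 R))

/-- Strictly negative imaginary (SNI) real-rational transfer matrix. -/
def IsSNI (G : Matrix (Fin n) (Fin n) (RatFunc ℝ)) : Prop :=
  MemRHinf G ∧ ∀ ω : ℝ, 0 < ω → (niKer (evalM G (jw ω))).PosDef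

/-- Positive real (passive) real-rational transfer matrix. -/
def IsPositiveReal (G : Matrix (Fin n) (Fin n) (RatFunc ℝ)) : Prop :=
  MemRHinf G ∧ ∀ ω : ℝ, 0 ≤ ω → (evalM G (jw ω) + (evalM G (jw ω))ᴴ).PosSemidef

/-- Output strictly passive real-rational transfer matrix. -/
def IsOSP (G : Matrix (Fin n) (Fin n) (RatFunc ℝ)) : Prop :=
  MemRHinf G ∧ ∃ ε : ℝ, 0 < ε ∧ ∀ ω : ℝ, 0 ≤ ω →
    (evalM G (jw ω) + (evalM G (jw ω))ᴴ -
      (ε : ℂ) • ((evalM G (jw ω))ᴴ * evalM G (jw ω))).PosSemidef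

/-- Stability of the positive feedback interconnection `[P, C]`:
`[I; C] (I − P C)⁻¹ [I, P] ∈ RH∞`. -/
def FeedbackStable (P C : Matrix (Fin n) (Fin n) (RatFunc ℝ)) : Prop :=
  ((1 : Matrix (Fin n) (Fin n) (RatFunc ℝ)) - P * C).det ≠ 0 ∧
  MemRHinf (Matrix.fromBlocks
    (1 - P * C)⁻¹ ((1 - P * C)⁻¹ * P)
    (C * (1 - P * C)⁻¹) (C * (1 - P * C)⁻¹ * P))

/-- All eigenvalues of the complex matrix `M` are real and less than `c`. -/
def eigsRealAndLT (M : Matrix (Fin n) (Fin n) ℂ) (c : ℝ) : Prop :=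
  ∀ μ ∈ spectrum ℂ M, μ.im = 0 ∧ μ.re < c

/-- The (real) eigenvalues of the real matrix `M` are all real and its largest
eigenvalue is less than `c`. -/
def maxEigLT (M : Matrix (Fin n) (Fin n) ℝ) (c : ℝ) : Prop :=
  eigsRealAndLT (M.map (Complex.ofReal)) c

/-- Loewner order `A ≤ B` on real matrices. -/
def LoewnerLE (A B : Matrix (Fin n) (Fin n) ℝ) : Prop := (B - A).PosSemidef

/-- Strict Loewner order `A < B` on real matrices. -/
def LoewnerLT (A B : Matrix (Fin n) (Fin n) ℝ) : Prop := (B - A).PosDef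

/-!
Both directions rest on one consequence of the negative imaginary property: for a system `G` without
a pole at the origin, `(x* G(0) x - x* G(s) x) / s` has nonnegative real part on the right half
plane, by the minimum principle, and `s → ∞` along the real axis gives `G(∞) ≤ G(0)`. For ordered
Hermitian `X₁ ≤ X₀`, the eigenvalue conditions (b) and (c) then say that `I - X Y` is nonsingular
for `X` on the segment from `X₁` to `X₀`.

*Sufficiency.* Deform `P(s)` to `P(0)`, then `C(s)` to `C(0)`. By (b), (c) and the strictness of `C`
no zero of the determinant crosses the boundary of the right half plane, so by Hurwitz's theorem
`det (I - P C)` has no zero inside. At `jω`, which may be a pole of `P`, the closed loop stays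
bounded because `Im x* (C⁻¹ - P) x` is bounded below there.

*Necessity.* If the loop is stable, the inverse of `Θ = [-P, I; I, -C]` is again negative imaginary
without a pole at the origin, so `Θ(∞)⁻¹ ≤ Θ(0)⁻¹` as well as `Θ(0) ≤ Θ(∞)`. Together these force
every Hermitian matrix between `Θ(0)` and `Θ(∞)` to be nonsingular.
-/

/-! ### Holomorphic functions on the right half-plane -/

section RightHalfPlane

/-- The open right half-plane. -/
def RHP : Set ℂ := {s | 0 < s.re}

/-- The filter of points of the open right half-plane that approach its boundary in the Riemann
sphere, i.e. some point `jω` of the imaginary axis or `∞`. -/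
def rhpBoundary : Filter ℂ := (⨆ ω : ℝ, 𝓝[RHP] (jw ω)) ⊔ (Bornology.cobounded ℂ ⊓ 𝓟 RHP)

lemma isOpen_RHP : IsOpen RHP := isOpen_lt continuous_const Complex.continuous_re

lemma isPreconnected_RHP : IsPreconnected RHP := (convex_halfSpace_re_gt 0).isPreconnected

lemma jw_re (ω : ℝ) : (jw ω).re = 0 := by simp [jw]

lemma jw_im (ω : ℝ) : (jw ω).im = ω := by simp [jw]

lemma jw_zero : jw 0 = 0 := by simp [jw]

lemma conj_jw (ω : ℝ) : starRingEnd ℂ (jw ω) = jw (-ω) := by simp [jw]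

lemma eq_jw_of_re_eq_zero {s : ℂ} (h : s.re = 0) : s = jw s.im := by
  apply Complex.ext <;> simp [jw, h]

lemma continuous_jw : Continuous jw := by unfold jw; fun_prop

lemma jw_injective : Function.Injective jw := fun a b h => by
  simpa only [jw_im] using congrArg Complex.im h

lemma jw_ne_zero {ω : ℝ} (hω : ω ≠ 0) : jw ω ≠ 0 := jw_zero ▸ jw_injective.ne hω

lemma re_div_jw (z : ℂ) (ω : ℝ) : (z / jw ω).re = z.im / ω := by
  rw [jw, ← div_div, Complex.div_ofReal_re, Complex.div_I]
  simp

lemma tendsto_jw_nhdsNE (ω : ℝ) : Tendsto jw (𝓝[≠] ω) (𝓝[≠] jw ω) :=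
  continuous_jw.continuousAt.tendsto.inf (by simp [jw_injective.eq_iff])

instance nhdsWithin_RHP_jw_neBot (ω : ℝ) : (𝓝[RHP] jw ω).NeBot := by
  rw [← mem_closure_iff_nhdsWithin_neBot, RHP, Complex.closure_setOfPred_lt_re]
  exact (jw_re ω).ge

instance rhpBoundary_neBot : rhpBoundary.NeBot :=
  (nhdsWithin_RHP_jw_neBot 0).mono <| (le_iSup (fun ω => 𝓝[RHP] (jw ω)) 0).trans le_sup_left

lemma eventually_mem_RHP_rhpBoundary : ∀ᶠ s in rhpBoundary, s ∈ RHP := by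
  simp only [rhpBoundary, eventually_sup, eventually_iSup]
  exact ⟨fun _ => self_mem_nhdsWithin, mem_inf_of_right (mem_principal_self _)⟩

lemma nhdsWithin_RHP_jw_le_nhdsNE (ω : ℝ) : 𝓝[RHP] jw ω ≤ 𝓝[≠] jw ω :=
  nhdsWithin_mono _ fun s (hs : 0 < s.re) h => hs.ne' (by rw [h, jw_re])

lemma eventually_rhpBoundary {p : ℂ → Prop} (h_zero : ∀ᶠ s in 𝓝[RHP] 0, p s)
    (h_infty : ∀ᶠ s in Bornology.cobounded ℂ, p s) (h_pos : ∀ ω > 0, ∀ᶠ s in 𝓝[RHP] jw ω, p s)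
    (h_neg : ∀ ω > 0, ∀ᶠ s in 𝓝[RHP] jw ω, p (starRingEnd ℂ s)) : ∀ᶠ s in rhpBoundary, p s := by
  simp only [rhpBoundary, eventually_sup, eventually_iSup]
  refine ⟨fun ω => ?_, h_infty.filter_mono inf_le_left⟩
  rcases lt_trichotomy ω 0 with hω | rfl | hω
  · have hconj : Tendsto (starRingEnd ℂ) (𝓝[RHP] jw ω) (𝓝[RHP] jw (-ω)) := by
      rw [← conj_jw]
      exact Complex.continuous_conj.continuousWithinAt.tendsto_nhdsWithin fun s hs => by
        simpa [RHP] using hs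
    simpa using hconj.eventually (h_neg (-ω) (neg_pos.2 hω))
  · rwa [jw_zero]
  · exact h_pos ω hω

lemma exists_isCompact_of_eventually_rhpBoundary {p : ℂ → Prop} (h : ∀ᶠ s in rhpBoundary, p s) :
    ∃ K ⊆ RHP, IsCompact K ∧ ∀ s ∈ RHP, s ∉ K → p s := by
  simp only [rhpBoundary, eventually_sup, eventually_iSup] at h
  obtain ⟨h_axis, h_infty⟩ := h
  let Z : Set ℂ := {s ∈ RHP | ¬ p s}
  have hZ_bounded : Bornology.IsBounded Z := by
    rw [Bornology.isBounded_def]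
    filter_upwards [eventually_inf_principal.1 h_infty] with s hs hsZ
    exact hsZ.2 (hs hsZ.1)
  refine ⟨closure Z, fun s hs => ?_, hZ_bounded.isCompact_closure,
    fun s hs hsK => by_contra fun hp => hsK (subset_closure ⟨hs, hp⟩)⟩
  have hre : 0 ≤ s.re := closure_minimal (fun z (hz : z ∈ Z) => le_of_lt hz.1)
    (isClosed_le continuous_const Complex.continuous_re) hs
  refine hre.lt_of_ne fun h0 => ?_
  have hnear := h_axis s.im
  rw [← eq_jw_of_re_eq_zero h0.symm, eventually_nhdsWithin_iff] at hnear
  obtain ⟨z, hz, hpz⟩ := ((mem_closure_iff_frequently.1 hs).and_eventually hnear).exists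
  exact hz.2 (hpz hz.1)

lemma eqOn_const_re_of_isMinOn {U : Set ℂ} (hU : IsOpen U) (hUc : IsPreconnected U) {h : ℂ → ℂ}
    (hd : DifferentiableOn ℂ h U) {z : ℂ} (hz : z ∈ U) (hmin : IsMinOn (fun s => (h s).re) U z) :
    ∀ s ∈ U, (h s).re = (h z).re := by
  have hmax : IsMaxOn (norm ∘ fun s => Complex.exp (-(h s))) U z := fun s hs => by
    simpa [Complex.norm_exp] using hmin hs
  intro s hs
  simpa [Complex.norm_exp] using
    Complex.norm_eqOn_of_isPreconnected_of_isMaxOn hUc hU hd.neg.cexp hz hmax hs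

theorem re_nonneg_of_eventually_rhpBoundary {h : ℂ → ℂ} (hd : DifferentiableOn ℂ h RHP)
    (hb : ∀ ε > 0, ∀ᶠ s in rhpBoundary, -ε < (h s).re) : ∀ s ∈ RHP, 0 ≤ (h s).re := by
  by_contra! ⟨s₁, hs₁, hneg⟩
  have hb₁ := hb _ (neg_pos.2 hneg)
  simp only [neg_neg] at hb₁
  obtain ⟨K, hKR, hK, hKb⟩ := exists_isCompact_of_eventually_rhpBoundary hb₁
  have hs₁K : s₁ ∈ K := by_contra fun hn => lt_irrefl _ (hKb s₁ hs₁ hn)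
  obtain ⟨z, hzK, hz⟩ := hK.exists_isMinOn ⟨s₁, hs₁K⟩
    (Complex.continuous_re.comp_continuousOn (hd.mono hKR).continuousOn)
  have hmin : IsMinOn (fun s => (h s).re) RHP z := fun s hs => by
    by_cases hsK : s ∈ K
    · exact hz hsK
    · exact le_trans (hz hs₁K) (hKb s hs hsK).le
  have hconst := eqOn_const_re_of_isMinOn isOpen_RHP isPreconnected_RHP hd (hKR hzK) hmin
  obtain ⟨s, hs, hsR⟩ := (hb₁.and eventually_mem_RHP_rhpBoundary).exists
  exact absurd hs (((hconst s hsR).trans (hconst s₁ hs₁).symm).not_gt)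

end RightHalfPlane

section Homotopy

lemma exists_eq_zero_of_norm_lt_on_sphere {f : ℂ → ℂ} {z : ℂ} {r m : ℝ} (hr : 0 < r)
    (hd : DifferentiableOn ℂ f (Metric.closedBall z r)) (hsph : ∀ w ∈ Metric.sphere z r, m ≤ ‖f w‖)
    (hz : ‖f z‖ < m) : ∃ w ∈ Metric.closedBall z r, f w = 0 := by
  by_contra! hne
  have hm : 0 < m := (norm_nonneg _).trans_lt hz
  have hdiff : DiffContOnCl ℂ (fun w => (f w)⁻¹) (Metric.ball z r) := by
    apply DifferentiableOn.diffContOnCl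
    rw [closure_ball z hr.ne']
    exact hd.inv hne
  have hle : ‖(f z)⁻¹‖ ≤ m⁻¹ := by
    refine Complex.norm_le_of_forall_mem_frontier_norm_le Metric.isBounded_ball hdiff
      (fun w hw => ?_) (subset_closure (Metric.mem_ball_self hr))
    rw [frontier_ball z hr.ne'] at hw
    rw [norm_inv]
    exact inv_anti₀ hm (hsph w hw)
  rw [norm_inv, inv_le_inv₀ (norm_pos_iff.2 (hne z (Metric.mem_closedBall_self hr.le))) hm] at hle
  exact hz.not_ge hle

variable {T : Type*} [TopologicalSpace T] {f : T → ℂ → ℂ}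

lemma hurwitz_eventually_exists_eq_zero {U : Set ℂ} (hU : IsOpen U)
    (hcont : ContinuousOn (fun p : T × ℂ => f p.1 p.2) (Set.univ ×ˢ U))
    (hd : ∀ τ, DifferentiableOn ℂ (f τ) U) {τ₀ : T} {z : ℂ} (hz : z ∈ U) (hfz : f τ₀ z = 0)
    (hiso : ∀ᶠ w in 𝓝[≠] z, f τ₀ w ≠ 0) : ∀ᶠ τ in 𝓝 τ₀, ∃ w ∈ U, f τ w = 0 := by
  obtain ⟨r, hr, hball⟩ := Metric.nhds_basis_closedBall.eventually_iff.1
    ((eventually_nhdsWithin_iff.1 hiso).and (hU.mem_nhds hz))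
  have hballU : Metric.closedBall z r ⊆ U := fun w hw => (hball hw).2
  have hsphU : Metric.sphere z r ⊆ U := Metric.sphere_subset_closedBall.trans hballU
  have hcontAt : ∀ w ∈ U, ContinuousAt (fun p : T × ℂ => f p.1 p.2) (τ₀, w) := fun w hw =>
    hcont.continuousAt (prod_mem_nhds univ_mem (hU.mem_nhds hw))
  obtain ⟨w₀, hw₀, hmin⟩ := (isCompact_sphere z r).exists_isMinOn
    (NormedSpace.sphere_nonempty.2 hr.le) ((hd τ₀).continuousOn.norm.mono hsphU)
  have hpos : 0 < ‖f τ₀ w₀‖ := norm_pos_iff.2 <|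
    (hball (Metric.sphere_subset_closedBall hw₀)).1 (Metric.ne_of_mem_sphere hw₀ hr.ne')
  have hsph : ∀ᶠ τ in 𝓝 τ₀, ∀ w ∈ Metric.sphere z r, ‖f τ₀ w₀‖ / 2 < ‖f τ w‖ := by
    refine (isCompact_sphere z r).eventually_forall_of_forall_eventually fun w hw => ?_
    exact (hcontAt w (hsphU hw)).norm.eventually_const_lt
      ((half_lt_self hpos).trans_le (hmin hw))
  have hcenter : ∀ᶠ τ in 𝓝 τ₀, ‖f τ z‖ < ‖f τ₀ w₀‖ / 2 := by
    have hc : ContinuousAt (fun τ => ‖f τ z‖) τ₀ :=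
      ((hcontAt z hz).comp (f := fun τ => (τ, z)) (by fun_prop)).norm
    exact hc.eventually_lt_const (by simpa [hfz] using hpos)
  filter_upwards [hsph, hcenter] with τ hτ hτz
  obtain ⟨w, hw, hfw⟩ := exists_eq_zero_of_norm_lt_on_sphere hr ((hd τ).mono hballU)
    (fun w hw => (hτ w hw).le) hτz
  exact ⟨w, hballU hw, hfw⟩

lemma eventually_ne_zero_of_exists_ne_zero {U : Set ℂ} (hU : IsOpen U) (hUc : IsPreconnected U)
    {g : ℂ → ℂ} (hd : DifferentiableOn ℂ g U) (hg : ∃ w ∈ U, g w ≠ 0) {z : ℂ} (hz : z ∈ U) :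
    ∀ᶠ w in 𝓝[≠] z, g w ≠ 0 := by
  have hana : AnalyticOnNhd ℂ g U := hd.analyticOnNhd hU
  refine (hana z hz).eventually_eq_zero_or_eventually_ne_zero.resolve_left fun h => ?_
  obtain ⟨w, hw, hgw⟩ := hg
  exact hgw (hana.eqOn_zero_of_preconnected_of_eventuallyEq_zero hUc hz h hw)

-- The parameters for which `f τ` has a zero form a closed set (zeros stay in a compact set) which
-- is open by Hurwitz's theorem.
theorem ne_zero_on_RHP_of_homotopy [PreconnectedSpace T]
    (hcont : ContinuousOn (fun p : T × ℂ => f p.1 p.2) (Set.univ ×ˢ RHP))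
    (hd : ∀ τ, DifferentiableOn ℂ (f τ) RHP)
    (hb : ∀ᶠ s in rhpBoundary, ∀ τ, f τ s ≠ 0) {τ₀ : T} (h₀ : ∀ s ∈ RHP, f τ₀ s ≠ 0) :
    ∀ τ, ∀ s ∈ RHP, f τ s ≠ 0 := by
  obtain ⟨K, hKR, hK, hKne⟩ := exists_isCompact_of_eventually_rhpBoundary hb
  let Z : Set T := {τ | ∃ s ∈ RHP, f τ s = 0}
  have hZ_closed : IsClosed Z := by
    have hproj : Z = Prod.fst '' {p : T × K | f p.1 p.2 = 0} := by
      ext τ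
      constructor
      · rintro ⟨s, hs, hfs⟩
        exact ⟨(τ, ⟨s, by_contra fun hsK => hKne s hs hsK τ hfs⟩), hfs, rfl⟩
      · rintro ⟨⟨_, s⟩, hfs, rfl⟩
        exact ⟨s, hKR s.2, hfs⟩
    have hcontK : Continuous fun p : T × K => f p.1 p.2 :=
      hcont.comp_continuous (f := fun p : T × K => (p.1, (p.2 : ℂ))) (by fun_prop)
        fun p => ⟨trivial, hKR p.2.2⟩
    have : CompactSpace K := isCompact_iff_compactSpace.1 hK
    exact hproj ▸ isClosedMap_fst_of_compactSpace _ (isClosed_eq hcontK continuous_const)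
  have hZ_open : IsOpen Z := by
    obtain ⟨w, hw, hwR⟩ := (hb.and eventually_mem_RHP_rhpBoundary).exists
    refine isOpen_iff_mem_nhds.2 fun τ ⟨s, hs, hfs⟩ => ?_
    exact hurwitz_eventually_exists_eq_zero isOpen_RHP hcont hd hs hfs <|
      eventually_ne_zero_of_exists_ne_zero isOpen_RHP isPreconnected_RHP (hd τ)
        ⟨w, hwR, hw τ⟩ hs
  have hZ_ne_univ : Z ≠ Set.univ := fun h => by
    obtain ⟨s, hs, hfs⟩ := h.ge (Set.mem_univ τ₀)
    exact h₀ s hs hfs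
  have hZ_empty : Z = ∅ := (isClopen_iff.1 ⟨hZ_closed, hZ_open⟩).resolve_right hZ_ne_univ
  exact fun τ s hs hfs => hZ_empty.le ⟨s, hs, hfs⟩

end Homotopy

section RemovableSingularity

lemma exists_tendsto_sub_div_of_tendsto_mul {f : ℂ → ℂ} {a r : ℂ}
    (hd : ∀ᶠ s in 𝓝[≠] a, DifferentiableAt ℂ f s)
    (hr : Tendsto (fun s => (s - a) * f s) (𝓝[≠] a) (𝓝 r)) :
    ∃ k, Tendsto (fun s => f s - r / (s - a)) (𝓝[≠] a) (𝓝 k) := by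
  let g : ℂ → ℂ := Function.update (fun s => (s - a) * f s) a r
  have hg : ∀ s ≠ a, g s = (s - a) * f s := fun s hs => Function.update_of_ne hs ..
  have hgd : ∀ᶠ s in 𝓝[≠] a, DifferentiableAt ℂ g s := by
    filter_upwards [hd, self_mem_nhdsWithin] with s hs hsa
    have heq : g =ᶠ[𝓝 s] fun s => (s - a) * f s := (isOpen_ne.eventually_mem hsa).mono hg
    exact heq.differentiableAt_iff.2 (by fun_prop)
  have hana : AnalyticAt ℂ g a :=
    Complex.analyticAt_of_differentiable_on_punctured_nhds_of_continuousAt hgd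
      (continuousAt_update_same.2 hr)
  refine ⟨deriv g a, (hana.differentiableAt.hasDerivAt.tendsto_slope).congr' ?_⟩
  filter_upwards [self_mem_nhdsWithin] with s hs
  have hsa : s - a ≠ 0 := sub_ne_zero.2 hs
  rw [slope_def_field, hg s hs, show g a = r from Function.update_self .., sub_div,
    mul_div_cancel_left₀ _ hsa]

end RemovableSingularity

/-! ### Quadratic forms of complex matrices -/

section QuadraticForm

variable {m : Type*} [Fintype m]

/-- The quadratic form `x* M x` of a complex matrix. -/
def qf (M : Matrix m m ℂ) (x : m → ℂ) : ℂ := star x ⬝ᵥ M *ᵥ x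

/-- `x* M x` has nonpositive imaginary part for every `x`; equivalently `j (M - M*) ≥ 0`. -/
def ImNonpos (M : Matrix m m ℂ) : Prop := ∀ x, (qf M x).im ≤ 0

lemma qf_add (M N : Matrix m m ℂ) (x : m → ℂ) : qf (M + N) x = qf M x + qf N x := by
  simp [qf, add_mulVec, dotProduct_add]

lemma qf_sub (M N : Matrix m m ℂ) (x : m → ℂ) : qf (M - N) x = qf M x - qf N x := by
  simp [qf, sub_mulVec, dotProduct_sub]

lemma qf_smul (c : ℂ) (M : Matrix m m ℂ) (x : m → ℂ) : qf (c • M) x = c * qf M x := by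
  simp [qf, smul_mulVec]

lemma qf_smul_right (c : ℂ) (M : Matrix m m ℂ) (x : m → ℂ) :
    qf M (c • x) = (‖c‖ ^ 2 : ℝ) * qf M x := by
  simp only [qf, mulVec_smul, star_smul, smul_dotProduct, dotProduct_smul, smul_eq_mul, ← mul_assoc,
    RCLike.star_def, Complex.mul_conj']
  push_cast
  rfl

lemma qf_conjTranspose (M : Matrix m m ℂ) (x : m → ℂ) : qf Mᴴ x = star (qf M x) := by
  rw [qf, qf, star_dotProduct, star_mulVec, conjTranspose_conjTranspose, dotProduct_mulVec]

lemma qf_map_conj (M : Matrix m m ℂ) (x : m → ℂ) :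
    qf (M.map (starRingEnd ℂ)) (star x) = star (qf M x) := by
  simp [qf, dotProduct, mulVec]

lemma qf_inv [DecidableEq m] {M : Matrix m m ℂ} (hM : M.det ≠ 0) (y : m → ℂ) :
    qf M⁻¹ y = star (qf M (M⁻¹ *ᵥ y)) := by
  have hy : M *ᵥ (M⁻¹ *ᵥ y) = y := by rw [mulVec_mulVec, mul_nonsing_inv _ hM.isUnit, one_mulVec]
  rw [qf, qf, hy, star_dotProduct]

lemma continuous_qf : Continuous fun p : Matrix m m ℂ × (m → ℂ) => qf p.1 p.2 := by
  unfold qf; fun_prop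

lemma continuous_qf_left (x : m → ℂ) : Continuous fun M : Matrix m m ℂ => qf M x :=
  continuous_qf.comp (.prodMk_left x)

lemma im_qf_eq_zero_of_isHermitian {M : Matrix m m ℂ} (hM : M.IsHermitian) (x : m → ℂ) :
    (qf M x).im = 0 := by
  rw [← Complex.conj_eq_iff_im, ← RCLike.star_def, ← qf_conjTranspose, hM.eq]

lemma ofReal_re_qf_of_isHermitian {M : Matrix m m ℂ} (hM : M.IsHermitian) (x : m → ℂ) :
    ((qf M x).re : ℂ) = qf M x :=
  Complex.ext rfl (im_qf_eq_zero_of_isHermitian hM x).symm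

lemma isHermitian_of_im_qf_eq_zero {M : Matrix m m ℂ} (hM : ∀ x, (qf M x).im = 0) :
    M.IsHermitian := by
  classical
  rw [← isSymmetric_toEuclideanLin_iff, LinearMap.isSymmetric_iff_inner_map_self_real]
  intro v
  rw [Complex.conj_eq_iff_im, EuclideanSpace.inner_eq_star_dotProduct, dotProduct_star,
    dotProduct_comm, RCLike.star_def, Complex.conj_im, neg_eq_zero]
  exact hM v.ofLp

lemma posSemidef_of_qf_nonneg {M : Matrix m m ℂ} (hM : ∀ x, 0 ≤ qf M x) : M.PosSemidef :=
  .of_dotProduct_mulVec_nonneg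
    (isHermitian_of_im_qf_eq_zero fun x => (Complex.le_def.1 (hM x)).2.symm) hM

lemma ImNonpos.of_tendsto {ι : Type*} {l : Filter ι} [l.NeBot] {F : ι → Matrix m m ℂ}
    {M : Matrix m m ℂ} (h : Tendsto F l (𝓝 M)) (hF : ∀ᶠ i in l, ImNonpos (F i)) : ImNonpos M := by
  intro x
  have hcont : Continuous fun M : Matrix m m ℂ => (qf M x).im :=
    Complex.continuous_im.comp (continuous_qf_left x)
  exact le_of_tendsto ((hcont.tendsto M).comp h) (hF.mono fun i hi => hi x)

lemma ImNonpos.isHermitian_of_map_conj {M : Matrix m m ℂ} (hM : ImNonpos M)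
    (hreal : M.map (starRingEnd ℂ) = M) : M.IsHermitian := by
  refine isHermitian_of_im_qf_eq_zero fun x => (hM x).antisymm ?_
  have hx := hM (star x)
  rw [← hreal, qf_map_conj, RCLike.star_def, Complex.conj_im] at hx
  linarith

lemma exists_pos_le_im_qf_of_sphere {M : Matrix m m ℂ} (hM : ∀ x ≠ 0, 0 < (qf M x).im) :
    ∃ c > 0, ∀ x ∈ Metric.sphere 0 1, c ≤ (qf M x).im := by
  have hcont : Continuous fun x => (qf M x).im :=
    Complex.continuous_im.comp (continuous_qf.comp (.prodMk_right M))
  exact (isCompact_sphere (0 : m → ℂ) 1).exists_forall_le' hcont.continuousOn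
    fun x hx => hM x (Metric.ne_of_mem_sphere hx one_ne_zero)

lemma eventually_forall_sphere_qf_mem {ι : Type*} {l : Filter ι} {F : ι → Matrix m m ℂ}
    {M : Matrix m m ℂ} (h : Tendsto F l (𝓝 M)) {U : Set ℂ} (hU : IsOpen U)
    (hM : ∀ x ∈ Metric.sphere 0 1, qf M x ∈ U) :
    ∀ᶠ i in l, ∀ x ∈ Metric.sphere 0 1, qf (F i) x ∈ U := by
  have hnhds : ∀ᶠ N in 𝓝 M, ∀ x ∈ Metric.sphere 0 1, qf N x ∈ U := by
    refine (isCompact_sphere _ _).eventually_forall_of_forall_eventually fun x hx => ?_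
    exact continuous_qf.continuousAt.eventually_mem (hU.mem_nhds (hM x hx))
  exact h.eventually hnhds

lemma exists_sphere_qf_eq (M : Matrix m m ℂ) {x : m → ℂ} (hx : x ≠ 0) :
    ∃ u ∈ Metric.sphere 0 1, qf M x = (‖x‖ ^ 2 : ℝ) * qf M u := by
  have hn : (‖x‖ : ℂ) ≠ 0 := mod_cast norm_ne_zero_iff.2 hx
  refine ⟨(‖x‖ : ℂ)⁻¹ • x, by simp [norm_smul, hx], ?_⟩
  conv_lhs => rw [← smul_inv_smul₀ hn x, qf_smul_right, Complex.norm_real, norm_norm]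

lemma mul_sq_norm_le_im_qf {M : Matrix m m ℂ} {c : ℝ}
    (hM : ∀ x ∈ Metric.sphere 0 1, c ≤ (qf M x).im) (x : m → ℂ) : c * ‖x‖ ^ 2 ≤ (qf M x).im := by
  rcases eq_or_ne x 0 with rfl | hx
  · simp [qf]
  obtain ⟨u, hu, hxu⟩ := exists_sphere_qf_eq M hx
  rw [hxu, Complex.im_ofReal_mul, mul_comm]
  exact mul_le_mul_of_nonneg_left (hM u hu) (by positivity)

lemma det_ne_zero_of_qf_ne_zero [DecidableEq m] {M : Matrix m m ℂ} (hM : ∀ x ≠ 0, qf M x ≠ 0) :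
    M.det ≠ 0 := fun h0 => by
  obtain ⟨v, hv, hMv⟩ := exists_mulVec_eq_zero_iff.2 h0
  exact hM v hv (by rw [qf, hMv, dotProduct_zero])

lemma norm_inv_apply_le_of_le_norm_qf [DecidableEq m] {M : Matrix m m ℂ} {c : ℝ} (hc : 0 < c)
    (hM : ∀ x, c * ‖x‖ ^ 2 ≤ ‖qf M x‖) (i j : m) : ‖M⁻¹ i j‖ ≤ c⁻¹ := by
  have hdet : M.det ≠ 0 := det_ne_zero_of_qf_ne_zero fun x hx h0 => by
    have := hM x
    rw [h0, norm_zero] at this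
    exact absurd this (not_le.2 (by positivity))
  set x : m → ℂ := M⁻¹ *ᵥ Pi.single j 1
  have hMx : M *ᵥ x = Pi.single j 1 := by
    rw [mulVec_mulVec, mul_nonsing_inv _ hdet.isUnit, one_mulVec]
  have hle : c * ‖x‖ ^ 2 ≤ ‖x‖ := by
    refine (hM x).trans ?_
    rw [qf, hMx, dotProduct_single, mul_one, Pi.star_apply, norm_star]
    exact norm_le_pi_norm x j
  have hxc : ‖x‖ ≤ c⁻¹ := by
    rcases (norm_nonneg x).eq_or_lt with h0 | hpos
    · rw [← h0]; positivity
    · rw [le_inv_comm₀ hpos hc, ← one_div, le_div_iff₀ hpos]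
      nlinarith
  calc ‖M⁻¹ i j‖ = ‖x i‖ := by simp [x]
    _ ≤ c⁻¹ := (norm_le_pi_norm x i).trans hxc

end QuadraticForm

section NIKernel

lemma qf_niKer (M : Matrix (Fin n) (Fin n) ℂ) (x : Fin n → ℂ) :
    qf (niKer M) x = ((-2 * (qf M x).im : ℝ) : ℂ) := by
  rw [niKer, qf_smul, qf_sub, qf_conjTranspose, RCLike.star_def, Complex.sub_conj]
  push_cast
  linear_combination (2 * ((qf M x).im : ℂ)) * Complex.I_mul_I

lemma imNonpos_of_posSemidef_niKer {M : Matrix (Fin n) (Fin n) ℂ} (h : (niKer M).PosSemidef) :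
    ImNonpos M := fun x => by
  have hx : 0 ≤ qf (niKer M) x := h.dotProduct_mulVec_nonneg x
  rw [qf_niKer, Complex.zero_le_real] at hx
  linarith

lemma im_qf_neg_of_posDef_niKer {M : Matrix (Fin n) (Fin n) ℂ} (h : (niKer M).PosDef)
    {x : Fin n → ℂ} (hx : x ≠ 0) : (qf M x).im < 0 := by
  have hpos : 0 < qf (niKer M) x := h.dotProduct_mulVec_pos hx
  rw [qf_niKer, Complex.zero_lt_real] at hpos
  linarith

end NIKernel

/-! ### Loewner order and generalized eigenvalues -/

section Loewner

open scoped MatrixOrder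

variable {m : Type*} [Fintype m] {A B X : Matrix m m ℂ}

lemma qf_le_qf_of_le (h : A ≤ B) (x : m → ℂ) : qf A x ≤ qf B x := by
  rw [← sub_nonneg, ← qf_sub]
  exact (Matrix.le_iff.1 h).dotProduct_mulVec_nonneg x

lemma mulVec_eq_of_le_of_qf_eq (hAB : A ≤ B) {x : m → ℂ} (hx : qf A x = qf B x) :
    A *ᵥ x = B *ᵥ x := by
  have hzero := ((Matrix.le_iff.1 hAB).dotProduct_mulVec_zero_iff x).1 <| by
    rw [← qf, qf_sub, hx, sub_self]
  rwa [sub_mulVec, sub_eq_zero, eq_comm] at hzero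

lemma star_dotProduct_mulVec_comm (hA : A.IsHermitian) (x y : m → ℂ) :
    star x ⬝ᵥ A *ᵥ y = star (star y ⬝ᵥ A *ᵥ x) := by
  rw [star_dotProduct, star_mulVec, hA.eq, dotProduct_mulVec]

lemma exists_mulVec_eq_of_le (hA : 0 ≤ A) (hAB : A ≤ B) (v : m → ℂ) :
    ∃ y, B *ᵥ y = A *ᵥ v := by
  classical
  have hAh : A.IsHermitian := (Matrix.nonneg_iff_posSemidef.1 hA).1
  have hBh : (toEuclideanLin B).IsSymmetric :=
    isSymmetric_toEuclideanLin_iff.2 (Matrix.nonneg_iff_posSemidef.1 (hA.trans hAB)).1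
  suffices hmem : WithLp.toLp 2 (A *ᵥ v) ∈ (toEuclideanLin B).range by
    obtain ⟨y, hy⟩ := hmem
    exact ⟨y.ofLp, congrArg WithLp.ofLp hy⟩
  rw [← Submodule.orthogonal_orthogonal (toEuclideanLin B).range, hBh.orthogonal_range]
  intro u hu
  have hBu : B *ᵥ u.ofLp = 0 := congrArg WithLp.ofLp hu
  have hqA : qf 0 u.ofLp = qf A u.ofLp :=
    (qf_le_qf_of_le hA _).antisymm <| (qf_le_qf_of_le hAB _).trans_eq <| by simp [qf, hBu]
  have hAu : A *ᵥ u.ofLp = 0 := by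
    rw [← mulVec_eq_of_le_of_qf_eq hA hqA, zero_mulVec]
  rw [EuclideanSpace.inner_eq_star_dotProduct, dotProduct_comm,
    star_dotProduct_mulVec_comm hAh, hAu, dotProduct_zero, star_zero]

-- For invertible `B` this is `A B⁻¹ A ≤ A`.
lemma qf_le_qf_of_mulVec_eq (hA : 0 ≤ A) (hAB : A ≤ B) {v y : m → ℂ} (hy : B *ᵥ y = A *ᵥ v) :
    qf B y ≤ qf A v := by
  have hAh : A.IsHermitian := (Matrix.nonneg_iff_posSemidef.1 hA).1
  have hBh : B.IsHermitian := (Matrix.nonneg_iff_posSemidef.1 (hA.trans hAB)).1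
  have hyAv : star y ⬝ᵥ A *ᵥ v = qf B y := by rw [← hy, qf]
  have hvAy : star v ⬝ᵥ A *ᵥ y = qf B y := by
    rw [star_dotProduct_mulVec_comm hAh, hyAv, ← qf_conjTranspose, hBh.eq]
  have hexpand : qf A (v - y) = qf A v - qf B y + (qf A y - qf B y) := by
    rw [qf, mulVec_sub, star_sub, sub_dotProduct, dotProduct_sub, dotProduct_sub, hyAv, hvAy,
      ← qf, ← qf]
    ring
  have hnonneg : 0 ≤ qf A (v - y) := by simpa [qf] using qf_le_qf_of_le hA (v - y)
  rw [← sub_nonneg]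
  exact (hexpand ▸ hnonneg).trans (add_le_of_nonpos_right (sub_nonpos.2 (qf_le_qf_of_le hAB y)))

theorem det_ne_zero_of_le_of_le_of_inv_le [DecidableEq m] (hA : A.IsHermitian) (hAdet : A.det ≠ 0)
    (hBdet : B.det ≠ 0) (hAX : A ≤ X) (hXB : X ≤ B) (hinv : B⁻¹ ≤ A⁻¹) : X.det ≠ 0 := fun h0 => by
  obtain ⟨v, hv, hXv⟩ := exists_mulVec_eq_zero_iff.2 h0
  have hS : 0 ≤ X - A := sub_nonneg.2 hAX
  have hSD : X - A ≤ B - A := sub_le_sub_right hXB A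
  obtain ⟨y, hy⟩ := exists_mulVec_eq_of_le hS hSD v
  have hSv : (X - A) *ᵥ v = -(A *ᵥ v) := by rw [sub_mulVec, hXv, zero_sub]
  have hBy : B *ᵥ y = A *ᵥ (y - v) := by
    rw [mulVec_sub, sub_eq_add_neg, ← hSv, ← hy, sub_mulVec, add_sub_cancel]
  have hAinv : A⁻¹ *ᵥ (B *ᵥ y) = y - v := by
    rw [hBy, mulVec_mulVec, nonsing_inv_mul _ hAdet.isUnit, one_mulVec]
  have hBinv : B⁻¹ *ᵥ (B *ᵥ y) = y := by
    rw [mulVec_mulVec, nonsing_inv_mul _ hBdet.isUnit, one_mulVec]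
  have hgap : qf A⁻¹ (B *ᵥ y) - qf B⁻¹ (B *ᵥ y) = qf (B - A) y - qf (X - A) v := by
    have hyAv : star y ⬝ᵥ A *ᵥ v = -qf (B - A) y := by
      rw [← neg_neg (A *ᵥ v), ← hSv, ← hy, dotProduct_neg, ← qf]
    have hvAv : star v ⬝ᵥ A *ᵥ v = -qf (X - A) v := by
      rw [← neg_neg (A *ᵥ v), ← hSv, dotProduct_neg, ← qf]
    rw [qf, qf, hAinv, hBinv, dotProduct_sub, sub_sub_cancel_left, hBy, star_mulVec, hA.eq,
      ← dotProduct_mulVec, star_sub, sub_dotProduct, hyAv, hvAv]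
    ring
  have hle : qf A⁻¹ (B *ᵥ y) ≤ qf B⁻¹ (B *ᵥ y) := by
    rw [← sub_nonpos, hgap, sub_nonpos]
    exact qf_le_qf_of_mulVec_eq hS hSD hy
  have heq := mulVec_eq_of_le_of_qf_eq hinv ((qf_le_qf_of_le hinv _).antisymm hle)
  rw [hAinv, hBinv, eq_comm, sub_eq_self] at heq
  exact hv heq

end Loewner

section GeneralizedEigenvalue

open scoped MatrixOrder

lemma mem_spectrum_mul_inv_iff {m : Type*} [Fintype m] [DecidableEq m] {N M : Matrix m m ℂ}
    (hM : M.det ≠ 0) {μ : ℂ} :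
    μ ∈ spectrum ℂ (N * M⁻¹) ↔ ∃ v ≠ 0, N *ᵥ v = μ • M *ᵥ v := by
  have hfactor : μ • M - N = (algebraMap ℂ _ μ - N * M⁻¹) * M := by
    rw [sub_mul, nonsing_inv_mul_cancel_right _ _ hM.isUnit, ← Algebra.smul_def]
  have hdet : (algebraMap ℂ _ μ - N * M⁻¹).det = 0 ↔ (μ • M - N).det = 0 := by
    rw [hfactor, det_mul, mul_eq_zero, or_iff_left hM]
  rw [spectrum.mem_iff, Matrix.isUnit_iff_isUnit_det, isUnit_iff_ne_zero, not_not, hdet,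
    ← exists_mulVec_eq_zero_iff]
  simp only [sub_mulVec, smul_mulVec, sub_eq_zero, eq_comm]

variable {X₀ X₁ Y : Matrix (Fin n) (Fin n) ℂ}

lemma im_eq_zero_of_mem_spectrum (hX₁ : X₁.IsHermitian) (hX : X₁ ≤ X₀) (hY : Y.IsHermitian)
    (hdet : (1 - X₁ * Y).det ≠ 0) {μ : ℂ}
    (hμ : μ ∈ spectrum ℂ ((X₀ * Y - 1) * (1 - X₁ * Y)⁻¹)) : μ.im = 0 := by
  obtain ⟨v, hv, hNv⟩ := (mem_spectrum_mul_inv_iff hdet).1 hμ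
  simp only [sub_mulVec, one_mulVec, ← mulVec_mulVec] at hNv
  set y := Y *ᵥ v
  have hreal : ((star y ⬝ᵥ v) - qf X₁ y).im = 0 := by
    have hyv : star y ⬝ᵥ v = qf Y v := by rw [star_mulVec, hY.eq, ← dotProduct_mulVec, qf]
    rw [Complex.sub_im, hyv, im_qf_eq_zero_of_isHermitian hY, im_qf_eq_zero_of_isHermitian hX₁,
      sub_zero]
  have hpair : qf (X₀ - X₁) y = (1 + μ) * (star y ⬝ᵥ v - qf X₁ y) := by
    have h := congrArg (star y ⬝ᵥ ·) hNv
    simp only [dotProduct_sub, dotProduct_smul, smul_eq_mul] at h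
    rw [qf_sub, qf, qf]
    linear_combination h
  by_cases hzero : star y ⬝ᵥ v - qf X₁ y = 0
  · rw [hzero, mul_zero, qf_sub, sub_eq_zero, eq_comm] at hpair
    rw [← mulVec_eq_of_le_of_qf_eq hX hpair] at hNv
    have hne : v - X₁ *ᵥ y ≠ 0 := fun h0 => hdet <| exists_mulVec_eq_zero_iff.1
      ⟨v, hv, by rw [sub_mulVec, one_mulVec, ← mulVec_mulVec, h0]⟩
    have hμ1 : μ = -1 := smul_left_injective ℂ hne <| by
      simp only [← hNv, neg_smul, one_smul, neg_sub]
    simp [hμ1]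
  · have him := congrArg Complex.im hpair
    rw [im_qf_eq_zero_of_isHermitian (Matrix.le_iff.1 hX).1, Complex.mul_im, hreal, mul_zero,
      zero_add, eq_comm, mul_eq_zero] at him
    simpa using him.resolve_right fun hre => hzero (Complex.ext hre hreal)

-- `(X₀ Y - 1) v = (a / b) (1 - X₁ Y) v` says that `(a X₁ + b X₀) Y v = v`.
lemma div_mem_spectrum_iff (hdet : (1 - X₁ * Y).det ≠ 0) {a b : ℝ} (hb : b ≠ 0) (hab : a + b = 1) :
    ((a / b : ℝ) : ℂ) ∈ spectrum ℂ ((X₀ * Y - 1) * (1 - X₁ * Y)⁻¹) ↔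
      (1 - (a • X₁ + b • X₀) * Y).det = 0 := by
  rw [mem_spectrum_mul_inv_iff hdet, ← exists_mulVec_eq_zero_iff]
  refine exists_congr fun v => and_congr_right fun _ => ?_
  rw [← smul_right_inj hb, eq_comm, ← sub_eq_zero]
  refine Eq.congr_left ?_
  have hv : v = a • v + b • v := by rw [← add_smul, hab, one_smul]
  simp only [sub_mulVec, add_mul, add_mulVec, one_mulVec, smul_mulVec, smul_mul, Complex.coe_smul,
    smul_sub, smul_smul, mul_div_cancel₀ a hb]
  linear_combination (norm := module) -hv

theorem eigsRealAndLT_zero_iff (hX₁ : X₁.IsHermitian) (hX : X₁ ≤ X₀) (hY : Y.IsHermitian)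
    (hdet : (1 - X₁ * Y).det ≠ 0) :
    eigsRealAndLT ((X₀ * Y - 1) * (1 - X₁ * Y)⁻¹) 0 ↔
      ∀ X ∈ segment ℝ X₁ X₀, (1 - X * Y).det ≠ 0 := by
  constructor
  · rintro h _ ⟨a, b, ha, hb, hab, rfl⟩ h0
    rcases hb.eq_or_lt with rfl | hb'
    · exact hdet (by simpa [show a = 1 by simpa using hab] using h0)
    · have hneg := (h _ ((div_mem_spectrum_iff hdet hb'.ne' hab).2 h0)).2
      exact hneg.not_ge (div_nonneg ha hb)
  · intro h μ hμ
    have him := im_eq_zero_of_mem_spectrum hX₁ hX hY hdet hμ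
    refine ⟨him, lt_of_not_ge fun hre => ?_⟩
    have hpos : 0 < 1 + μ.re := by linarith
    have hsum : μ.re / (1 + μ.re) + 1 / (1 + μ.re) = 1 := by field_simp; ring
    have hdiv : ((μ.re / (1 + μ.re) / (1 / (1 + μ.re)) : ℝ) : ℂ) = μ := by
      rw [div_div_div_cancel_right₀ hpos.ne', div_one]
      exact Complex.ext rfl him.symm
    exact h _ ⟨_, _, by positivity, by positivity, hsum, rfl⟩ <|
      (div_mem_spectrum_iff hdet (by positivity) hsum).1 (hdiv.symm ▸ hμ)

end GeneralizedEigenvalue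

/-! ### Matrices of rational functions and their values -/

section ResidueMap

variable {K L m : Type*} [Field K] [Field L] [DecidableEq m]

/-- `e` restricts to a ring homomorphism on the subring `S` of the field `K`, and an element of `S`
is invertible in `S` as soon as its value is nonzero. This is the common pattern of evaluation at a
point, on the functions regular there, and of evaluation at `∞`, on the proper functions. -/
structure IsResidueMap (S : Subring K) (e : K → L) : Prop where
  map_one : e 1 = 1
  map_add : ∀ {f g}, f ∈ S → g ∈ S → e (f + g) = e f + e g
  map_mul : ∀ {f g}, f ∈ S → g ∈ S → e (f * g) = e f * e g
  inv_mem : ∀ {f}, f ∈ S → e f ≠ 0 → f⁻¹ ∈ S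

variable {S : Subring K} {e : K → L} {A B : Matrix m m K}

/-- The ring homomorphism on `S` given by a residue map. -/
def IsResidueMap.toRingHom (he : IsResidueMap S e) : S →+* L where
  toFun f := e f
  map_one' := he.map_one
  map_mul' f g := he.map_mul f.2 g.2
  map_zero' := by simpa using he.map_add S.zero_mem S.zero_mem
  map_add' f g := he.map_add f.2 g.2

lemma IsResidueMap.map_matrix_one (he : IsResidueMap S e) : (1 : Matrix m m K).map e = 1 :=
  Matrix.map_one e he.toRingHom.map_zero he.map_one

variable [Fintype m]

lemma IsResidueMap.exists_lift (he : IsResidueMap S e) (hA : A ∈ S.matrix) :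
    ∃ A' : Matrix m m S, S.subtype.mapMatrix A' = A ∧ he.toRingHom.mapMatrix A' = A.map e :=
  ⟨of fun i j => ⟨A i j, hA i j⟩, rfl, rfl⟩

lemma IsResidueMap.map_matrix_mul (he : IsResidueMap S e) (hA : A ∈ S.matrix) (hB : B ∈ S.matrix) :
    (A * B).map e = A.map e * B.map e := by
  obtain ⟨A', rfl, hA'⟩ := he.exists_lift hA
  obtain ⟨B', rfl, hB'⟩ := he.exists_lift hB
  rw [← hA', ← hB', ← _root_.map_mul, ← _root_.map_mul]
  rfl

lemma IsResidueMap.map_matrix_sub (he : IsResidueMap S e) (hA : A ∈ S.matrix) (hB : B ∈ S.matrix) :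
    (A - B).map e = A.map e - B.map e := by
  obtain ⟨A', rfl, hA'⟩ := he.exists_lift hA
  obtain ⟨B', rfl, hB'⟩ := he.exists_lift hB
  rw [← hA', ← hB', ← map_sub, ← map_sub]
  rfl

lemma IsResidueMap.map_det (he : IsResidueMap S e) (hA : A ∈ S.matrix) :
    e A.det = (A.map e).det := by
  obtain ⟨A', rfl, hA'⟩ := he.exists_lift hA
  rw [← hA', ← RingHom.map_det, ← RingHom.map_det]
  rfl

lemma IsResidueMap.matrix_inv_mem (he : IsResidueMap S e) (hA : A ∈ S.matrix)
    (hdet : (A.map e).det ≠ 0) : A⁻¹ ∈ S.matrix := by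
  obtain ⟨A', rfl, -⟩ := he.exists_lift hA
  intro i j
  rw [inv_def, Ring.inverse_eq_inv', Matrix.smul_apply, smul_eq_mul, ← RingHom.map_adjugate]
  refine S.mul_mem (he.inv_mem ?_ ?_) (A'.adjugate i j).2
  · rw [← RingHom.map_det]
    exact A'.det.2
  · rwa [he.map_det hA]

lemma IsResidueMap.det_ne_zero (he : IsResidueMap S e) (hA : A ∈ S.matrix)
    (hdet : (A.map e).det ≠ 0) : A.det ≠ 0 := fun h0 => by
  rw [← he.map_det hA, h0] at hdet
  exact hdet he.toRingHom.map_zero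

lemma IsResidueMap.map_matrix_inv (he : IsResidueMap S e) (hA : A ∈ S.matrix)
    (hdet : (A.map e).det ≠ 0) : A⁻¹.map e = (A.map e)⁻¹ := by
  refine (inv_eq_left_inv ?_).symm
  rw [← he.map_matrix_mul (he.matrix_inv_mem hA hdet) hA,
    nonsing_inv_mul _ (he.det_ne_zero hA hdet).isUnit, he.map_matrix_one]

lemma IsResidueMap.map_one_sub_mul (he : IsResidueMap S e) (hA : A ∈ S.matrix)
    (hB : B ∈ S.matrix) : (1 - A * B).map e = 1 - A.map e * B.map e := by
  rw [he.map_matrix_sub S.matrix.one_mem (S.matrix.mul_mem hA hB), he.map_matrix_mul hA hB,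
    he.map_matrix_one]

end ResidueMap

lemma map_inv_matrix {K L m : Type*} [Field K] [Field L] [Fintype m] [DecidableEq m] (f : K →+* L)
    (A : Matrix m m K) : A⁻¹.map f = (A.map f)⁻¹ := by
  change f.mapMatrix A⁻¹ = (f.mapMatrix A)⁻¹
  rw [inv_def, inv_def, Ring.inverse_eq_inv', Ring.inverse_eq_inv', ← RingHom.map_det, ← map_inv₀,
    ← RingHom.map_adjugate]
  ext i j
  simp

section Regular

lemma not_isPoleAt_of_denom_dvd {f : RatFunc ℝ} {q : ℝ[X]} {s : ℂ} (h : f.denom ∣ q)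
    (hq : q.eval₂ (algebraMap ℝ ℂ) s ≠ 0) : ¬ IsPoleAt f s :=
  fun hf => hq (eval₂_eq_zero_of_dvd_of_eval₂_eq_zero _ _ h hf)

/-- The ring of rational functions without a pole at `s`. -/
def regularSubring (s : ℂ) : Subring (RatFunc ℝ) where
  carrier := {f | ¬ IsPoleAt f s}
  mul_mem' {f g} hf hg := not_isPoleAt_of_denom_dvd (RatFunc.denom_mul_dvd f g) <| by
    rw [eval₂_mul]
    exact mul_ne_zero hf hg
  one_mem' := by simp [IsPoleAt]
  add_mem' {f g} hf hg := not_isPoleAt_of_denom_dvd (RatFunc.denom_add_dvd f g) <| by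
    rw [eval₂_mul]
    exact mul_ne_zero hf hg
  zero_mem' := by simp [IsPoleAt]
  neg_mem' {f} hf := by
    refine not_isPoleAt_of_denom_dvd ((RatFunc.denom_dvd f.denom_ne_zero).2 ⟨-f.num, ?_⟩) hf
    rw [map_neg, neg_div, RatFunc.num_div_denom]

lemma isResidueMap_evalC (s : ℂ) : IsResidueMap (regularSubring s) (evalC · s) where
  map_one := by simp [evalC]
  map_add hf hg := RatFunc.eval_add _ _ hf hg
  map_mul hf hg := RatFunc.eval_mul _ _ hf hg
  inv_mem {f} _ hfs := by
    have hf0 : f ≠ 0 := by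
      rintro rfl
      exact hfs (by simp [evalC])
    exact not_isPoleAt_of_denom_dvd (RatFunc.denom_inv_dvd hf0) (div_ne_zero_iff.1 hfs).1

lemma eval₂_conj (q : ℝ[X]) (s : ℂ) : q.eval₂ (algebraMap ℝ ℂ) (starRingEnd ℂ s) =
    starRingEnd ℂ (q.eval₂ (algebraMap ℝ ℂ) s) := by
  rw [hom_eval₂]
  congr 1
  ext x
  simp

lemma evalC_conj (f : RatFunc ℝ) (s : ℂ) :
    evalC f (starRingEnd ℂ s) = starRingEnd ℂ (evalC f s) := by
  simp only [evalC, RatFunc.eval, eval₂_conj, map_div₀]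

lemma regularSubring_conj (s : ℂ) : regularSubring (starRingEnd ℂ s) = regularSubring s := by
  ext f
  exact not_congr (by rw [IsPoleAt, IsPoleAt, eval₂_conj, map_eq_zero])

lemma evalC_ofReal (f : RatFunc ℝ) (x : ℝ) : evalC f x = (f.eval (RingHom.id ℝ) x : ℝ) := by
  have h (q : ℝ[X]) : q.eval₂ (algebraMap ℝ ℂ) (algebraMap ℝ ℂ x) =
      algebraMap ℝ ℂ (q.eval₂ (RingHom.id ℝ) x) := by
    rw [hom_eval₂, RingHom.comp_id]
  simp only [evalC, RatFunc.eval, ← Complex.coe_algebraMap, h, map_div₀]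

lemma differentiableAt_evalC {f : RatFunc ℝ} {s : ℂ} (hf : f ∈ regularSubring s) :
    DifferentiableAt ℂ (evalC f) s := by
  have hpoly (q : ℝ[X]) : DifferentiableAt ℂ (fun s => q.eval₂ (algebraMap ℝ ℂ) s) s := by
    simp only [← eval_map]
    exact Polynomial.differentiableAt _
  exact (hpoly f.num).div (hpoly f.denom) hf

lemma eventually_mem_regularSubring (f : RatFunc ℝ) : ∀ᶠ s in cofinite, f ∈ regularSubring s := by
  have hroots := finite_setOfPred_isRoot ((Polynomial.map_ne_zero_iff
    (algebraMap ℝ ℂ).injective).2 f.denom_ne_zero)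
  refine hroots.subset fun s hs => ?_
  simpa [IsRoot, regularSubring, IsPoleAt, eval_map] using hs

lemma mem_regularSubring_of_norm_evalC_le {f : RatFunc ℝ} {s₀ : ℂ} {l : Filter ℂ} [l.NeBot]
    (hl : l ≤ 𝓝[≠] s₀) {b : ℝ} (hb : ∀ᶠ s in l, ‖evalC f s‖ ≤ b) : f ∈ regularSubring s₀ := by
  intro hpole
  have hpoly (q : ℝ[X]) : Tendsto (fun s : ℂ => q.eval₂ (algebraMap ℝ ℂ) s) l
      (𝓝 (q.eval₂ (algebraMap ℝ ℂ) s₀)) :=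
    (q.continuous_eval₂ _).continuousAt.mono_left (hl.trans nhdsWithin_le_nhds)
  have hprod : Tendsto (fun s => f.denom.eval₂ (algebraMap ℝ ℂ) s * evalC f s) l (𝓝 0) :=
    (hpole ▸ hpoly f.denom).zero_mul_isBoundedUnder_le ⟨b, eventually_map.2 hb⟩
  have hnum : f.num.eval₂ (algebraMap ℝ ℂ) s₀ = 0 := by
    refine tendsto_nhds_unique (hpoly f.num) (hprod.congr' ?_)
    filter_upwards [hl (nhdsNE_le_cofinite s₀ (eventually_mem_regularSubring f))] with s hs
    exact mul_div_cancel₀ _ hs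
  obtain ⟨a, b, hab⟩ := f.isCoprime_num_denom
  have hone := congrArg (eval₂ (algebraMap ℝ ℂ) s₀) hab
  rw [eval₂_add, eval₂_mul, eval₂_mul, hnum, hpole, eval₂_one] at hone
  simp at hone

end Regular

section Proper

lemma degree_num_le_degree_denom_iff {f : RatFunc ℝ} :
    f.num.degree ≤ f.denom.degree ↔ f.intDegree ≤ 0 := by
  rw [degree_eq_natDegree f.denom_ne_zero, ← natDegree_le_iff_degree_le, RatFunc.intDegree]
  omega

/-- The ring of proper rational functions. -/
def properSubring : Subring (RatFunc ℝ) where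
  carrier := {f | f.num.degree ≤ f.denom.degree}
  mul_mem' {f g} hf hg := by
    rw [Set.mem_ofPred_eq, degree_num_le_degree_denom_iff] at *
    by_cases hzero : f = 0 ∨ g = 0
    · rw [mul_eq_zero.2 hzero, RatFunc.intDegree_zero]
    · push Not at hzero
      rw [RatFunc.intDegree_mul hzero.1 hzero.2]
      exact add_nonpos hf hg
  one_mem' := by simp
  add_mem' {f g} hf hg := by
    rw [Set.mem_ofPred_eq, degree_num_le_degree_denom_iff] at *
    rcases eq_or_ne g 0 with rfl | hg0
    · rwa [add_zero]
    rcases eq_or_ne (f + g) 0 with hfg | hfg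
    · rw [hfg, RatFunc.intDegree_zero]
    · exact (RatFunc.intDegree_add_le hg0 hfg).trans (max_le hf hg)
  zero_mem' := by simp
  neg_mem' {f} hf := by
    rw [Set.mem_ofPred_eq, degree_num_le_degree_denom_iff] at *
    rwa [RatFunc.intDegree_neg]

lemma tendsto_eval₂_div_pow_cobounded {q : ℝ[X]} {N : ℕ} (hN : q.natDegree ≤ N) :
    Tendsto (fun s : ℂ => q.eval₂ (algebraMap ℝ ℂ) s / s ^ N) (Bornology.cobounded ℂ)
      (𝓝 (q.coeff N : ℂ)) := by
  have hsum : Tendsto (fun s : ℂ => ∑ i ∈ Finset.range (N + 1), (q.coeff i : ℂ) * s⁻¹ ^ (N - i))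
      (Bornology.cobounded ℂ)
      (𝓝 (∑ i ∈ Finset.range (N + 1), (q.coeff i : ℂ) * 0 ^ (N - i))) :=
    tendsto_finsetSum _ fun i _ => tendsto_const_nhds.mul (tendsto_inv₀_cobounded.pow _)
  have hlim : ∑ i ∈ Finset.range (N + 1), (q.coeff i : ℂ) * 0 ^ (N - i) = q.coeff N := by
    rw [Finset.sum_range_succ, Finset.sum_eq_zero fun i hi => ?_]
    · simp
    · rw [zero_pow (Nat.sub_ne_zero_of_lt (Finset.mem_range.1 hi)), mul_zero]
  rw [hlim] at hsum
  refine hsum.congr' ?_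
  filter_upwards [Bornology.le_cofinite ℂ (Set.finite_singleton 0).compl_mem_cofinite] with s hs
  rw [eval₂_eq_sum_range' _ (Nat.lt_succ_of_le hN), Finset.sum_div]
  refine Finset.sum_congr rfl fun i hi => ?_
  have hpow : s ^ N = s ^ (N - i) * s ^ i := by
    rw [← pow_add, Nat.sub_add_cancel (Nat.lt_succ_iff.1 (Finset.mem_range.1 hi))]
  rw [hpow, mul_div_mul_right _ _ (pow_ne_zero i hs), inv_pow, ← div_eq_mul_inv,
    Complex.coe_algebraMap]

lemma tendsto_evalC_cobounded {f : RatFunc ℝ} (hf : f ∈ properSubring) :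
    Tendsto (evalC f) (Bornology.cobounded ℂ) (𝓝 (atInfinity f : ℂ)) := by
  have hle : f.num.degree ≤ f.denom.degree := hf
  have hden0 : (f.denom.coeff f.denom.natDegree : ℂ) ≠ 0 := by simp [f.denom_ne_zero]
  have hquot := (tendsto_eval₂_div_pow_cobounded (natDegree_le_natDegree hle)).div
    (tendsto_eval₂_div_pow_cobounded le_rfl) hden0
  have hlim : (f.num.coeff f.denom.natDegree : ℂ) / (f.denom.coeff f.denom.natDegree : ℂ) =
      atInfinity f := by
    rw [atInfinity]
    split_ifs with heq
    · rw [Complex.ofReal_div, leadingCoeff, leadingCoeff, natDegree_eq_of_degree_eq heq]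
    · rw [coeff_eq_zero_of_degree_lt, Complex.ofReal_zero, zero_div]
      exact (hle.lt_of_ne heq).trans_le degree_le_natDegree
  rw [hlim] at hquot
  refine hquot.congr' ?_
  filter_upwards [Bornology.le_cofinite ℂ (Set.finite_singleton 0).compl_mem_cofinite] with s hs
  exact div_div_div_cancel_right₀ (pow_ne_zero _ hs) _ _

lemma isResidueMap_atInfinity : IsResidueMap properSubring fun f => (atInfinity f : ℂ) where
  map_one := by simp [atInfinity]
  map_add {f g} hf hg := by
    refine tendsto_nhds_unique (tendsto_evalC_cobounded (properSubring.add_mem hf hg)) <|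
      ((tendsto_evalC_cobounded hf).add (tendsto_evalC_cobounded hg)).congr' ?_
    filter_upwards [Bornology.le_cofinite ℂ (eventually_mem_regularSubring f),
      Bornology.le_cofinite ℂ (eventually_mem_regularSubring g)] with s hfs hgs
    exact ((isResidueMap_evalC s).map_add hfs hgs).symm
  map_mul {f g} hf hg := by
    refine tendsto_nhds_unique (tendsto_evalC_cobounded (properSubring.mul_mem hf hg)) <|
      ((tendsto_evalC_cobounded hf).mul (tendsto_evalC_cobounded hg)).congr' ?_
    filter_upwards [Bornology.le_cofinite ℂ (eventually_mem_regularSubring f),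
      Bornology.le_cofinite ℂ (eventually_mem_regularSubring g)] with s hfs hgs
    exact ((isResidueMap_evalC s).map_mul hfs hgs).symm
  inv_mem {f} _ hf := by
    have hdeg : f.num.degree = f.denom.degree := by
      by_contra hne
      exact hf (by rw [atInfinity, if_neg hne, Complex.ofReal_zero])
    refine degree_num_le_degree_denom_iff.2 ?_
    rw [RatFunc.intDegree_inv, RatFunc.intDegree, natDegree_eq_of_degree_eq hdeg, sub_self,
      neg_zero]

end Proper

section Evaluation

lemma tendsto_matrix_iff {ι m n R : Type*} [TopologicalSpace R] {l : Filter ι}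
    {F : ι → Matrix m n R} {M : Matrix m n R} :
    Tendsto F l (𝓝 M) ↔ ∀ i j, Tendsto (fun k => F k i j) l (𝓝 (M i j)) :=
  tendsto_pi_nhds.trans <| forall_congr' fun _ => tendsto_pi_nhds

variable {m : Type*} {G : Matrix m m (RatFunc ℝ)} {s : ℂ}

/-- The value at `s` of a matrix of rational functions, over an arbitrary index type. -/
def evalMat (G : Matrix m m (RatFunc ℝ)) (s : ℂ) : Matrix m m ℂ := G.map (evalC · s)

/-- The value at `∞` of a matrix of proper rational functions, as a complex matrix. -/
def infMat (G : Matrix m m (RatFunc ℝ)) : Matrix m m ℂ := G.map fun f => (atInfinity f : ℂ)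

lemma evalMat_conj (G : Matrix m m (RatFunc ℝ)) (s : ℂ) :
    evalMat G (starRingEnd ℂ s) = (evalMat G s).map (starRingEnd ℂ) := by
  ext i j
  exact evalC_conj _ s

lemma evalMat_zero_map_conj (G : Matrix m m (RatFunc ℝ)) :
    (evalMat G 0).map (starRingEnd ℂ) = evalMat G 0 := by
  rw [← evalMat_conj, map_zero]

lemma infMat_map_conj (G : Matrix m m (RatFunc ℝ)) :
    (infMat G).map (starRingEnd ℂ) = infMat G := by
  ext i j
  exact Complex.conj_ofReal _

lemma evalMat_zero (G : Matrix (Fin n) (Fin n) (RatFunc ℝ)) :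
    evalMat G 0 = (evalR G 0).map Complex.ofReal := by
  ext i j
  exact mod_cast evalC_ofReal (G i j) 0

variable [Fintype m] [DecidableEq m]

lemma continuousAt_evalMat (hG : G ∈ (regularSubring s).matrix) : ContinuousAt (evalMat G) s :=
  tendsto_matrix_iff.2 fun i j => (differentiableAt_evalC (hG i j)).continuousAt

lemma tendsto_evalMat_cobounded (hG : G ∈ properSubring.matrix) :
    Tendsto (evalMat G) (Bornology.cobounded ℂ) (𝓝 (infMat G)) :=
  tendsto_matrix_iff.2 fun i j => tendsto_evalC_cobounded (hG i j)

lemma eventually_mem_matrix_regularSubring (G : Matrix m m (RatFunc ℝ)) :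
    ∀ᶠ s in cofinite, G ∈ (regularSubring s).matrix :=
  eventually_all.2 fun i => eventually_all.2 fun j => eventually_mem_regularSubring (G i j)

lemma differentiableAt_qf_evalMat (hG : G ∈ (regularSubring s).matrix) (x : m → ℂ) :
    DifferentiableAt ℂ (fun s => qf (evalMat G s) x) s := by
  have hentry (i j) : DifferentiableAt ℂ (fun s => evalMat G s i j) s :=
    differentiableAt_evalC (hG i j)
  simp only [qf, dotProduct, mulVec]
  fun_prop

end Evaluation

/-! ### Negative imaginary systems without a pole at the origin -/

section NIRegular

variable {m : Type*}

lemma exists_tendsto_evalMat_add_residue {G : Matrix m m (RatFunc ℝ)} {a : ℂ} {R : Matrix m m ℂ}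
    (hres : Tendsto (fun s => (s - a) • Complex.I • evalMat G s) (𝓝[≠] a) (𝓝 R)) :
    ∃ K, Tendsto (fun s => evalMat G s + (Complex.I / (s - a)) • R) (𝓝[≠] a) (𝓝 K) := by
  have hentry (i j) : ∃ k, Tendsto (fun s => evalMat G s i j + Complex.I / (s - a) * R i j)
      (𝓝[≠] a) (𝓝 k) := by
    have hd : ∀ᶠ s in 𝓝[≠] a, DifferentiableAt ℂ (evalC (G i j)) s := by
      filter_upwards [nhdsNE_le_cofinite a (eventually_mem_regularSubring (G i j))] with s hs
        using differentiableAt_evalC hs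
    have hr : Tendsto (fun s => (s - a) * evalMat G s i j) (𝓝[≠] a) (𝓝 (-Complex.I * R i j)) := by
      refine ((tendsto_matrix_iff.1 hres i j).const_mul (-Complex.I)).congr fun s => ?_
      simp only [Matrix.smul_apply, smul_eq_mul]
      linear_combination (-(s - a) * evalMat G s i j) * Complex.I_mul_I
    obtain ⟨k, hk⟩ := exists_tendsto_sub_div_of_tendsto_mul hd hr
    exact ⟨k, hk.congr fun s => by simp only [evalMat, map_apply]; ring⟩
  choose K hK using hentry
  exact ⟨of K, tendsto_matrix_iff.2 hK⟩

variable [Fintype m]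

lemma im_qf_le_im_qf_add_residue {M R : Matrix m m ℂ} (hR : R.PosSemidef) {s : ℂ} (hs : s ∈ RHP)
    (ω : ℝ) (x : m → ℂ) : (qf M x).im ≤ (qf (M + (Complex.I / (s - jw ω)) • R) x).im := by
  have hre : 0 ≤ (qf R x).re := (Complex.le_def.1 (hR.dotProduct_mulVec_nonneg x)).1
  have him : 0 ≤ (Complex.I / (s - jw ω)).im := by
    rw [div_eq_mul_inv, Complex.I_mul_im, Complex.inv_re, Complex.sub_re, jw_re, sub_zero]
    exact div_nonneg (le_of_lt hs) (Complex.normSq_nonneg _)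
  rw [qf_add, qf_smul, Complex.add_im, Complex.mul_im, im_qf_eq_zero_of_isHermitian hR.1]
  nlinarith [mul_nonneg him hre]

/-- The quotient `(x* G(0) x - x* G(s) x) / s`; on the imaginary axis the sign of its real part is
opposite to that of `Im (x* G(s) x) / Im s`. -/
def secantForm (G : Matrix m m (RatFunc ℝ)) (x : m → ℂ) (s : ℂ) : ℂ :=
  (qf (evalMat G 0) x - qf (evalMat G s) x) / s

lemma re_secantForm_conj (G : Matrix m m (RatFunc ℝ)) (x : m → ℂ) (s : ℂ) :
    (secantForm G x (starRingEnd ℂ s)).re = (secantForm G (star x) s).re := by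
  have hconj (M : Matrix m m ℂ) :
      qf (M.map (starRingEnd ℂ)) x = starRingEnd ℂ (qf M (star x)) := by
    simpa only [star_star, RCLike.star_def] using qf_map_conj M (star x)
  rw [secantForm, evalMat_conj, ← evalMat_zero_map_conj, hconj, hconj, ← map_sub, ← map_div₀,
    Complex.conj_re, secantForm]

variable [DecidableEq m]

/-- Negative imaginary systems without a pole at the origin, over an arbitrary index type. A point
`jω` that is not a pole has residue `R = 0`, so that poles need no separate treatment. -/
structure IsNIRegular (G : Matrix m m (RatFunc ℝ)) : Prop where
  proper : G ∈ properSubring.matrix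
  regular_RHP : ∀ s ∈ RHP, G ∈ (regularSubring s).matrix
  regular_zero : G ∈ (regularSubring 0).matrix
  imNonpos : ∀ ω > 0, G ∈ (regularSubring (jw ω)).matrix → ImNonpos (evalMat G (jw ω))
  residue : ∀ ω > 0, ∃ R : Matrix m m ℂ, R.PosSemidef ∧
    Tendsto (fun s => (s - jw ω) • Complex.I • evalMat G s) (𝓝[≠] jw ω) (𝓝 R)

lemma tendsto_sub_smul_evalMat_of_regular {G : Matrix m m (RatFunc ℝ)} {a : ℂ}
    (hG : G ∈ (regularSubring a).matrix) :
    Tendsto (fun s => (s - a) • Complex.I • evalMat G s) (𝓝[≠] a) (𝓝 0) := by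
  have hcont : ContinuousAt (fun s => (s - a) • Complex.I • evalMat G s) a := by
    have := continuousAt_evalMat hG
    fun_prop
  simpa using hcont.tendsto.mono_left nhdsWithin_le_nhds

lemma IsNI.isNIRegular {P : Matrix (Fin n) (Fin n) (RatFunc ℝ)} (hP : IsNI P)
    (hP0 : ¬ HasPole P 0) : IsNIRegular P := by
  have hreg {s : ℂ} (h : ¬ HasPole P s) : P ∈ (regularSubring s).matrix :=
    fun i j hij => h ⟨i, j, hij⟩
  obtain ⟨hproper, hrhp, hker, hres, -⟩ := hP
  refine ⟨hproper, fun s hs => hreg (hrhp s hs), hreg hP0, fun ω hω h => ?_, fun ω hω => ?_⟩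
  · exact imNonpos_of_posSemidef_niKer (hker ω hω fun ⟨i, j, hij⟩ => h i j hij)
  · by_cases hpole : HasPole P (jw ω)
    · exact hres ω hω hpole
    · exact ⟨0, .zero, tendsto_sub_smul_evalMat_of_regular (hreg hpole)⟩

lemma IsSNI.isNIRegular {C : Matrix (Fin n) (Fin n) (RatFunc ℝ)} (hC : IsSNI C) :
    IsNIRegular C where
  proper := hC.1.1
  regular_RHP s hs := hC.1.2 s (le_of_lt hs)
  regular_zero := hC.1.2 0 le_rfl
  imNonpos ω hω _ := imNonpos_of_posSemidef_niKer (hC.2 ω hω).posSemidef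
  residue ω _ := ⟨0, .zero, tendsto_sub_smul_evalMat_of_regular (hC.1.2 _ (jw_re ω).ge)⟩

namespace IsNIRegular

variable {G : Matrix m m (RatFunc ℝ)}

lemma eventually_imNonpos (hG : IsNIRegular G) :
    ∀ᶠ ω in cofinite, 0 < ω → ImNonpos (evalMat G (jw ω)) :=
  (jw_injective.tendsto_cofinite.eventually (eventually_mem_matrix_regularSubring G)).mono
    fun ω hω hpos => hG.imNonpos ω hpos hω

lemma isHermitian_evalMat_zero (hG : IsNIRegular G) : (evalMat G 0).IsHermitian := by
  have htend : Tendsto (fun ω => evalMat G (jw ω)) (𝓝[>] 0) (𝓝 (evalMat G 0)) := by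
    rw [← jw_zero]
    exact ((continuousAt_evalMat (jw_zero ▸ hG.regular_zero)).comp
      continuous_jw.continuousAt).tendsto.mono_left nhdsWithin_le_nhds
  refine (ImNonpos.of_tendsto htend ?_).isHermitian_of_map_conj (evalMat_zero_map_conj G)
  filter_upwards [nhdsGT_le_nhdsNE 0 (nhdsNE_le_cofinite 0 hG.eventually_imNonpos),
    self_mem_nhdsWithin] with ω h hω using h hω

lemma isHermitian_infMat (hG : IsNIRegular G) : (infMat G).IsHermitian := by
  have hjw : Tendsto jw atTop (Bornology.cobounded ℂ) := by
    rw [← tendsto_norm_atTop_iff_cobounded]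
    simpa [jw] using tendsto_abs_atTop_atTop
  refine (ImNonpos.of_tendsto ((tendsto_evalMat_cobounded hG.proper).comp hjw)
    ?_).isHermitian_of_map_conj (infMat_map_conj G)
  filter_upwards [atTop_le_cofinite hG.eventually_imNonpos, eventually_gt_atTop 0] with ω h hω
    using h hω

lemma exists_tendsto_add_residue (hG : IsNIRegular G) {ω : ℝ} (hω : 0 < ω) :
    ∃ R K : Matrix m m ℂ, R.PosSemidef ∧ ImNonpos K ∧
      Tendsto (fun s => evalMat G s + (Complex.I / (s - jw ω)) • R) (𝓝[≠] jw ω) (𝓝 K) := by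
  obtain ⟨R, hR, hres⟩ := hG.residue ω hω
  obtain ⟨K, hK⟩ := exists_tendsto_evalMat_add_residue hres
  refine ⟨R, K, hR, ImNonpos.of_tendsto (hK.comp (tendsto_jw_nhdsNE ω)) ?_, hK⟩
  filter_upwards [nhdsNE_le_cofinite ω hG.eventually_imNonpos,
    nhdsWithin_le_nhds (eventually_gt_nhds hω)] with θ hθ hpos x
  have hreal : Complex.I / (jw θ - jw ω) = ((θ - ω)⁻¹ : ℝ) := by
    rw [jw, jw, ← mul_sub, ← div_div, div_self Complex.I_ne_zero]
    push_cast
    exact one_div _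
  rw [Function.comp_apply, qf_add, qf_smul, hreal, Complex.add_im, Complex.im_ofReal_mul,
    im_qf_eq_zero_of_isHermitian hR.1, mul_zero, add_zero]
  exact hθ hpos x

lemma eventually_forall_sphere_im_qf_lt (hG : IsNIRegular G) {ω ε : ℝ} (hω : 0 < ω) (hε : 0 < ε) :
    ∀ᶠ s in 𝓝[RHP] jw ω, ∀ x ∈ Metric.sphere 0 1, (qf (evalMat G s) x).im < ε := by
  obtain ⟨R, K, hR, hK, hlim⟩ := hG.exists_tendsto_add_residue hω
  filter_upwards [self_mem_nhdsWithin, eventually_forall_sphere_qf_mem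
    (hlim.mono_left (nhdsWithin_RHP_jw_le_nhdsNE ω))
    (isOpen_lt Complex.continuous_im continuous_const)
    fun x _ => (hK x).trans_lt hε] with s hs hlt x hx
  exact (im_qf_le_im_qf_add_residue hR hs ω x).trans_lt (hlt x hx)

end IsNIRegular

-- `(g₀ - g) / s = (g₀ - u - r / ω) / s + (r / ω) / (s - jω)`, where `u` is the regular part of `g`.
lemma eventually_neg_lt_re_sub_div_of_residue {g : ℂ → ℂ} {k : ℂ} {g₀ r ω ε : ℝ} (hω : 0 < ω)
    (hr : 0 ≤ r) (hk : k.im ≤ 0) (hε : 0 < ε)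
    (hg : Tendsto (fun s => g s + Complex.I / (s - jw ω) * r) (𝓝[RHP] jw ω) (𝓝 k)) :
    ∀ᶠ s in 𝓝[RHP] jw ω, -ε < ((g₀ - g s) / s).re := by
  have hlim : Tendsto (fun s => ((g₀ - (g s + Complex.I / (s - jw ω) * r) - (r / ω : ℝ)) / s).re)
      (𝓝[RHP] jw ω) (𝓝 ((g₀ - k - (r / ω : ℝ)) / jw ω).re) :=
    (Complex.continuous_re.tendsto _).comp <|
      ((tendsto_const_nhds.sub hg).sub_const _).div
        (tendsto_id.mono_left nhdsWithin_le_nhds) (jw_ne_zero hω.ne')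
  have hre : -ε < ((g₀ - k - (r / ω : ℝ)) / jw ω).re := by
    have hnonneg : 0 ≤ -k.im / ω := div_nonneg (neg_nonneg.2 hk) hω.le
    rw [re_div_jw, Complex.sub_im, Complex.sub_im, Complex.ofReal_im, Complex.ofReal_im, zero_sub,
      sub_zero]
    linarith
  filter_upwards [hlim.eventually_const_lt hre, self_mem_nhdsWithin] with s hlt (hs : 0 < s.re)
  have hs0 : s ≠ 0 := fun h => by simp [h] at hs
  have hsω : s - jw ω ≠ 0 := fun h => by
    have := congrArg Complex.re h
    simp [jw_re, hs.ne'] at this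
  have hsplit : (g₀ - g s) / s = (g₀ - (g s + Complex.I / (s - jw ω) * r) - (r / ω : ℝ)) / s +
      (r / ω : ℝ) * (s - jw ω)⁻¹ := by
    have hωC : (ω : ℂ) ≠ 0 := mod_cast hω.ne'
    push_cast
    field_simp
    rw [jw]
    ring
  have hpole : 0 ≤ ((r / ω : ℝ) * (s - jw ω)⁻¹).re := by
    rw [Complex.re_ofReal_mul, Complex.inv_re, Complex.sub_re, jw_re, sub_zero]
    have := Complex.normSq_nonneg (s - jw ω)
    positivity
  rw [hsplit, Complex.add_re]
  linarith

namespace IsNIRegular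

variable {G : Matrix m m (RatFunc ℝ)}

lemma eventually_neg_lt_re_secantForm_near_zero (hG : IsNIRegular G) (x : m → ℂ) {ε : ℝ}
    (hε : 0 < ε) : ∀ᶠ s in 𝓝[RHP] 0, -ε < (secantForm G x s).re := by
  have hlim : Tendsto (secantForm G x) (𝓝[≠] 0)
      (𝓝 (-deriv (fun s => qf (evalMat G s) x) 0)) := by
    refine (differentiableAt_qf_evalMat hG.regular_zero x).hasDerivAt.tendsto_slope.neg.congr
      fun s => ?_
    rw [slope_def_field, secantForm, sub_zero, ← neg_div, neg_sub]
  have hre : Tendsto (fun s => (secantForm G x s).re) (𝓝[≠] 0)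
      (𝓝 (-deriv (fun s => qf (evalMat G s) x) 0).re) := (Complex.continuous_re.tendsto _).comp hlim
  have hjw : Tendsto jw (𝓝[>] 0) (𝓝[≠] 0) := by
    simpa only [jw_zero] using (tendsto_jw_nhdsNE 0).mono_left (nhdsGT_le_nhdsNE 0)
  have hderiv : 0 ≤ (-deriv (fun s => qf (evalMat G s) x) 0).re := by
    refine ge_of_tendsto (hre.comp hjw) ?_
    filter_upwards [nhdsGT_le_nhdsNE 0 (nhdsNE_le_cofinite 0 hG.eventually_imNonpos),
      self_mem_nhdsWithin] with ω h (hω : 0 < ω)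
    rw [Function.comp_apply, secantForm, re_div_jw, Complex.sub_im,
      im_qf_eq_zero_of_isHermitian hG.isHermitian_evalMat_zero, zero_sub]
    exact div_nonneg (neg_nonneg.2 (h hω x)) hω.le
  refine (hre.mono_left ?_).eventually_const_lt (by linarith)
  simpa only [jw_zero] using nhdsWithin_RHP_jw_le_nhdsNE 0

lemma eventually_neg_lt_re_secantForm_near_jw (hG : IsNIRegular G) (x : m → ℂ) {ω ε : ℝ}
    (hω : 0 < ω) (hε : 0 < ε) : ∀ᶠ s in 𝓝[RHP] jw ω, -ε < (secantForm G x s).re := by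
  obtain ⟨R, K, hR, hK, hlim⟩ := hG.exists_tendsto_add_residue hω
  have hr : 0 ≤ (qf R x).re := (Complex.le_def.1 (hR.dotProduct_mulVec_nonneg x)).1
  have hqf : Tendsto (fun s => qf (evalMat G s) x + Complex.I / (s - jw ω) * (qf R x).re)
      (𝓝[RHP] jw ω) (𝓝 (qf K x)) := by
    refine (((continuous_qf_left x).tendsto K).comp
      (hlim.mono_left (nhdsWithin_RHP_jw_le_nhdsNE ω))).congr fun s => ?_
    simp only [Function.comp_apply, qf_add, qf_smul, ofReal_re_qf_of_isHermitian hR.1]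
  simp only [secantForm]
  rw [← ofReal_re_qf_of_isHermitian hG.isHermitian_evalMat_zero]
  exact eventually_neg_lt_re_sub_div_of_residue hω hr (hK x) hε hqf

lemma tendsto_secantForm_cobounded (hG : IsNIRegular G) (x : m → ℂ) :
    Tendsto (secantForm G x) (Bornology.cobounded ℂ) (𝓝 0) := by
  have hlim := (((continuous_qf_left x).tendsto _).comp
    (tendsto_evalMat_cobounded hG.proper)).const_sub (qf (evalMat G 0) x)
  exact mul_zero (qf (evalMat G 0) x - qf (infMat G) x) ▸ hlim.mul tendsto_inv₀_cobounded

lemma eventually_neg_lt_re_secantForm (hG : IsNIRegular G) (x : m → ℂ) {ε : ℝ} (hε : 0 < ε) :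
    ∀ᶠ s in rhpBoundary, -ε < (secantForm G x s).re := by
  refine eventually_rhpBoundary (hG.eventually_neg_lt_re_secantForm_near_zero x hε) ?_
    (fun ω hω => hG.eventually_neg_lt_re_secantForm_near_jw x hω hε) fun ω hω => ?_
  · exact ((Complex.continuous_re.tendsto _).comp
      (hG.tendsto_secantForm_cobounded x)).eventually_const_lt (by simpa using hε)
  · simp only [re_secantForm_conj]
    exact hG.eventually_neg_lt_re_secantForm_near_jw (star x) hω hε

lemma re_secantForm_nonneg (hG : IsNIRegular G) (x : m → ℂ) {s : ℂ} (hs : s ∈ RHP) :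
    0 ≤ (secantForm G x s).re := by
  refine re_nonneg_of_eventually_rhpBoundary (fun s hs => ?_)
    (fun ε hε => hG.eventually_neg_lt_re_secantForm x hε) s hs
  have hs0 : s ≠ 0 := fun h => by simp [h, RHP] at hs
  have hd := differentiableAt_qf_evalMat (hG.regular_RHP s hs) x
  exact DifferentiableAt.differentiableWithinAt ((hd.const_sub _).div differentiableAt_id hs0)

open scoped MatrixOrder in
theorem infMat_le_evalMat_zero (hG : IsNIRegular G) : infMat G ≤ evalMat G 0 := by
  refine posSemidef_of_qf_nonneg fun x => ?_
  have hreal : Tendsto (fun t : ℝ => qf (evalMat G t) x) atTop (𝓝 (qf (infMat G) x)) :=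
    ((continuous_qf_left x).tendsto _).comp <|
      (tendsto_evalMat_cobounded hG.proper).comp (by
        rw [← tendsto_norm_atTop_iff_cobounded]
        simpa using tendsto_abs_atTop_atTop)
  have hre : (qf (infMat G) x).re ≤ (qf (evalMat G 0) x).re := by
    refine le_of_tendsto ((Complex.continuous_re.tendsto _).comp hreal) ?_
    filter_upwards [eventually_gt_atTop 0] with t ht
    have h := hG.re_secantForm_nonneg x (s := t) (by simpa [RHP] using ht)
    rw [secantForm, Complex.div_ofReal_re, Complex.sub_re] at h
    exact sub_nonneg.1 (nonneg_of_mul_nonneg_left h (inv_pos.2 ht))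
  rw [qf_sub, Complex.le_def]
  simp [im_qf_eq_zero_of_isHermitian hG.isHermitian_evalMat_zero,
    im_qf_eq_zero_of_isHermitian hG.isHermitian_infMat, hre]

end IsNIRegular

end NIRegular

/-! ### Sufficiency: deformation of the loop -/

section Deformation

variable {m : Type*} [Fintype m] [DecidableEq m]

lemma eventually_forall_segment_det_ne_zero {ι : Type*} {l : Filter ι} {X Y : ι → Matrix m m ℂ}
    {X₀ X₁ Y₁ : Matrix m m ℂ} (hX : Tendsto X l (𝓝 X₁)) (hY : Tendsto Y l (𝓝 Y₁))
    (h : ∀ Z ∈ segment ℝ X₀ X₁, (1 - Z * Y₁).det ≠ 0) :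
    ∀ᶠ i in l, ∀ Z ∈ segment ℝ X₀ (X i), (1 - Z * Y i).det ≠ 0 := by
  simp only [segment_eq_image, Set.forall_mem_image] at h ⊢
  have hnhds : ∀ᶠ p in 𝓝 (X₁, Y₁), ∀ τ ∈ Set.Icc (0 : ℝ) 1,
      (1 - ((1 - τ) • X₀ + τ • p.1) * p.2).det ≠ 0 := by
    refine isCompact_Icc.eventually_forall_of_forall_eventually fun τ hτ => ?_
    have hcont : Continuous fun q : (Matrix m m ℂ × Matrix m m ℂ) × ℝ =>
        (1 - ((1 - q.2) • X₀ + q.2 • q.1.1) * q.1.2).det := by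
      fun_prop
    exact hcont.continuousAt.eventually_ne (h hτ)
  exact (hX.prodMk_nhds hY).eventually hnhds

lemma forall_segment_det_ne_zero_conj {X₀ X Y : Matrix m m ℂ} (hX₀ : X₀.map (starRingEnd ℂ) = X₀)
    (h : ∀ Z ∈ segment ℝ X₀ X, (1 - Z * Y).det ≠ 0) :
    ∀ Z ∈ segment ℝ X₀ (X.map (starRingEnd ℂ)), (1 - Z * Y.map (starRingEnd ℂ)).det ≠ 0 := by
  rintro _ ⟨a, b, ha, hb, hab, rfl⟩
  have hconj : 1 - (a • X₀ + b • X.map (starRingEnd ℂ)) * Y.map (starRingEnd ℂ) =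
      (starRingEnd ℂ).mapMatrix (1 - (a • X₀ + b • X) * Y) := by
    have hsmul (c : ℝ) (M : Matrix m m ℂ) :
        (c • M).map (starRingEnd ℂ) = c • M.map (starRingEnd ℂ) := by
      ext; simp
    rw [map_sub, _root_.map_one, _root_.map_mul, _root_.map_add]
    simp only [RingHom.mapMatrix_apply, hsmul, hX₀]
  rw [hconj, ← RingHom.map_det, _root_.map_ne_zero]
  exact h _ ⟨a, b, ha, hb, hab, rfl⟩

lemma differentiableOn_det {U : Set ℂ} {M : ℂ → Matrix m m ℂ}
    (hM : ∀ i j, DifferentiableOn ℂ (fun s => M s i j) U) :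
    DifferentiableOn ℂ (fun s => (M s).det) U := by
  simp only [det_apply]
  fun_prop

theorem det_one_sub_mul_ne_zero_of_segment {X₀ : Matrix m m ℂ} {X Y : ℂ → Matrix m m ℂ}
    (hX : ∀ i j, DifferentiableOn ℂ (fun s => X s i j) RHP)
    (hY : ∀ i j, DifferentiableOn ℂ (fun s => Y s i j) RHP)
    (hb : ∀ᶠ s in rhpBoundary, ∀ Z ∈ segment ℝ X₀ (X s), (1 - Z * Y s).det ≠ 0)
    (h₀ : ∀ s ∈ RHP, (1 - X₀ * Y s).det ≠ 0) {s : ℂ} (hs : s ∈ RHP) :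
    (1 - X s * Y s).det ≠ 0 := by
  let f (τ : unitInterval) (s : ℂ) : ℂ := (1 - ((1 - τ : ℝ) • X₀ + (τ : ℝ) • X s) * Y s).det
  have hcont : ContinuousOn (fun p : unitInterval × ℂ => f p.1 p.2) (Set.univ ×ˢ RHP) := by
    have hsnd : Set.MapsTo Prod.snd (Set.univ ×ˢ RHP : Set (unitInterval × ℂ)) RHP :=
      fun p hp => hp.2
    have hXc : ContinuousOn (fun p : unitInterval × ℂ => X p.2) (Set.univ ×ˢ RHP) :=
      continuousOn_pi.2 fun i => continuousOn_pi.2 fun j =>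
        (hX i j).continuousOn.comp continuousOn_snd hsnd
    have hYc : ContinuousOn (fun p : unitInterval × ℂ => Y p.2) (Set.univ ×ˢ RHP) :=
      continuousOn_pi.2 fun i => continuousOn_pi.2 fun j =>
        (hY i j).continuousOn.comp continuousOn_snd hsnd
    have hτ : ContinuousOn (fun p : unitInterval × ℂ => (p.1 : ℝ)) (Set.univ ×ˢ RHP) :=
      (continuous_subtype_val.comp continuous_fst).continuousOn
    exact continuous_id.matrix_det.comp_continuousOn <| continuousOn_const.sub <|
      (((continuousOn_const.sub hτ).smul continuousOn_const).add (hτ.smul hXc)).mul hYc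
  have hd (τ : unitInterval) : DifferentiableOn ℂ (f τ) RHP := by
    refine differentiableOn_det fun i j => ?_
    simp only [Matrix.sub_apply, mul_apply, Matrix.add_apply, Matrix.smul_apply]
    fun_prop
  have hf := ne_zero_on_RHP_of_homotopy hcont hd (hb.mono fun s hs τ => hs _
    ⟨1 - τ, τ, sub_nonneg.2 τ.2.2, τ.2.1, by ring, rfl⟩) (τ₀ := 0)
    (fun s hs => by simpa [f] using h₀ s hs) 1 s hs
  simpa [f] using hf

lemma det_ne_zero_of_im_qf_neg {M : Matrix m m ℂ} (hM : ∀ x ≠ 0, (qf M x).im < 0) : M.det ≠ 0 :=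
  det_ne_zero_of_qf_ne_zero fun x hx h0 => (hM x hx).ne (by rw [h0, Complex.zero_im])

lemma det_ne_zero_of_le_im_qf {M : Matrix m m ℂ} {c : ℝ} (hc : 0 < c)
    (hM : ∀ x, c * ‖x‖ ^ 2 ≤ (qf M x).im) : M.det ≠ 0 :=
  det_ne_zero_of_qf_ne_zero fun x hx h0 => by
    have hle := hM x
    rw [h0, Complex.zero_im] at hle
    exact absurd hle (not_le.2 (by positivity))

lemma det_one_sub_mul_ne_zero_of_imNonpos {X Y : Matrix m m ℂ} (hX : ImNonpos X)
    (hY : ∀ x ≠ 0, (qf Y x).im < 0) : (1 - X * Y).det ≠ 0 := fun h0 => by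
  obtain ⟨v, hv, hv0⟩ := exists_mulVec_eq_zero_iff.2 h0
  rw [sub_mulVec, one_mulVec, ← mulVec_mulVec, sub_eq_zero] at hv0
  have hflip : qf Y v = star (qf X (Y *ᵥ v)) := by
    rw [qf, qf, ← hv0, star_dotProduct]
  have him := hY v hv
  rw [hflip, RCLike.star_def, Complex.conj_im] at him
  linarith [hX (Y *ᵥ v)]

end Deformation

section Loop

variable {P C : Matrix (Fin n) (Fin n) (RatFunc ℝ)}

lemma IsSNI.im_qf_neg (hC : IsSNI C) {ω : ℝ} (hω : 0 < ω) {x : Fin n → ℂ} (hx : x ≠ 0) :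
    (qf (evalMat C (jw ω)) x).im < 0 :=
  im_qf_neg_of_posDef_niKer (hC.2 ω hω) hx

lemma IsSNI.continuousAt_evalMat (hC : IsSNI C) (ω : ℝ) : ContinuousAt (evalMat C) (jw ω) :=
  NIControl.continuousAt_evalMat (hC.1.2 _ (jw_re ω).ge)

lemma IsSNI.eventually_im_qf_neg (hC : IsSNI C) {ω : ℝ} (hω : 0 < ω) :
    ∀ᶠ s in 𝓝 (jw ω), ∀ x ≠ 0, (qf (evalMat C s) x).im < 0 := by
  filter_upwards [eventually_forall_sphere_qf_mem (hC.continuousAt_evalMat ω)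
    (isOpen_lt Complex.continuous_im continuous_const)
    fun x hx => hC.im_qf_neg hω (Metric.ne_of_mem_sphere hx one_ne_zero)] with s hs x hx
  obtain ⟨u, hu, hxu⟩ := exists_sphere_qf_eq (evalMat C s) hx
  rw [hxu, Complex.im_ofReal_mul]
  exact mul_neg_of_pos_of_neg (by positivity) (hs u hu)

lemma IsNIRegular.differentiableOn_evalMat {m : Type*} [Fintype m] [DecidableEq m]
    {G : Matrix m m (RatFunc ℝ)} (hG : IsNIRegular G) (i j : m) :
    DifferentiableOn ℂ (fun s => evalMat G s i j) RHP := fun s hs =>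
  (differentiableAt_evalC (hG.regular_RHP s hs i j)).differentiableWithinAt

lemma det_one_sub_evalMat_zero_mul_ne_zero (hP₀ : (evalMat P 0).IsHermitian) (hC : IsSNI C)
    (hc : ∀ Y ∈ segment ℝ (infMat C) (evalMat C 0), (1 - Y * evalMat P 0).det ≠ 0) {s : ℂ}
    (hs : s ∈ RHP) : (1 - evalMat P 0 * evalMat C s).det ≠ 0 := by
  have hC' := hC.isNIRegular
  have hpos (ω : ℝ) (hω : 0 < ω) : ∀ᶠ s in 𝓝[RHP] jw ω,
      ∀ Y ∈ segment ℝ (evalMat C 0) (evalMat C s), (1 - Y * evalMat P 0).det ≠ 0 := by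
    filter_upwards [nhdsWithin_le_nhds (hC.eventually_im_qf_neg hω)] with s hs
    rintro _ ⟨a, b, -, hb, hab, rfl⟩
    rcases hb.eq_or_lt with rfl | hb
    · simpa [show a = 1 by simpa using hab] using hc _ (right_mem_segment ..)
    rw [det_one_sub_mul_comm]
    refine det_one_sub_mul_ne_zero_of_imNonpos
      (fun x => (im_qf_eq_zero_of_isHermitian hP₀ x).le) fun x hx => ?_
    simp only [← Complex.coe_smul, qf_add, qf_smul, Complex.add_im, Complex.im_ofReal_mul,
      im_qf_eq_zero_of_isHermitian hC'.isHermitian_evalMat_zero, mul_zero, zero_add]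
    exact mul_neg_of_pos_of_neg hb (hs x hx)
  rw [det_one_sub_mul_comm]
  refine det_one_sub_mul_ne_zero_of_segment hC'.differentiableOn_evalMat
    (Y := fun _ => evalMat P 0) (fun i j => differentiableOn_const _)
    (eventually_rhpBoundary ?_ ?_ hpos fun ω hω => ?_)
    (fun s _ => hc _ (right_mem_segment ..)) hs
  · refine eventually_forall_segment_det_ne_zero
      ((continuousAt_evalMat hC'.regular_zero).tendsto.mono_left nhdsWithin_le_nhds)
      tendsto_const_nhds fun Y hY => hc Y ?_
    rw [segment_same] at hY
    exact hY ▸ right_mem_segment ..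
  · refine eventually_forall_segment_det_ne_zero (tendsto_evalMat_cobounded hC'.proper)
      tendsto_const_nhds ?_
    rwa [segment_symm]
  · filter_upwards [hpos ω hω] with s hs
    have h := forall_segment_det_ne_zero_conj (evalMat_zero_map_conj C) hs
    rwa [← evalMat_conj, evalMat_zero_map_conj] at h

lemma IsSNI.det_ne_zero (hC : IsSNI C) {ω : ℝ} (hω : 0 < ω) : (evalMat C (jw ω)).det ≠ 0 :=
  det_ne_zero_of_im_qf_neg fun _ hx => hC.im_qf_neg hω hx

lemma IsSNI.tendsto_inv (hC : IsSNI C) {ω : ℝ} (hω : 0 < ω) :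
    Tendsto (fun s => (evalMat C s)⁻¹) (𝓝[RHP] jw ω) (𝓝 (evalMat C (jw ω))⁻¹) := by
  refine ((continuousAt_matrix_inv _ ?_).tendsto.comp (hC.continuousAt_evalMat ω)).mono_left
    nhdsWithin_le_nhds
  rw [Ring.inverse_eq_inv']
  exact continuousAt_inv₀ (hC.det_ne_zero hω)

lemma exists_pos_eventually_le_im_qf_inv_sub (hP : IsNIRegular P) (hC : IsSNI C) {ω : ℝ}
    (hω : 0 < ω) : ∃ c > 0, ∀ᶠ s in 𝓝[RHP] jw ω, ∀ X ∈ segment ℝ (evalMat P 0) (evalMat P s),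
      ∀ x, c * ‖x‖ ^ 2 ≤ (qf ((evalMat C s)⁻¹ - X) x).im := by
  have hinv : ∀ x ≠ 0, 0 < (qf (evalMat C (jw ω))⁻¹ x).im := fun x hx => by
    rw [qf_inv (hC.det_ne_zero hω), RCLike.star_def, Complex.conj_im, neg_pos]
    refine hC.im_qf_neg hω fun h0 => hx ?_
    rw [← one_mulVec x, ← mul_nonsing_inv _ (hC.det_ne_zero hω).isUnit, ← mulVec_mulVec, h0,
      mulVec_zero]
  obtain ⟨c, hc, hcle⟩ := exists_pos_le_im_qf_of_sphere hinv
  refine ⟨c / 4, by positivity, ?_⟩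
  filter_upwards [eventually_forall_sphere_qf_mem (hC.tendsto_inv hω)
      (isOpen_lt (continuous_const (y := c / 2)) Complex.continuous_im)
      fun x hx => (half_lt_self hc).trans_le (hcle x hx),
    hP.eventually_forall_sphere_im_qf_lt hω (ε := c / 4) (by positivity)] with s hCs hPs
  rintro _ ⟨a, b, ha, hb, hab, rfl⟩
  refine mul_sq_norm_le_im_qf fun x hx => ?_
  have hCx : c / 2 < (qf (evalMat C s)⁻¹ x).im := hCs x hx
  simp only [← Complex.coe_smul, qf_sub, qf_add, qf_smul, Complex.sub_im, Complex.add_im,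
    Complex.im_ofReal_mul, im_qf_eq_zero_of_isHermitian hP.isHermitian_evalMat_zero, mul_zero,
    zero_add]
  nlinarith [hPs x hx]

lemma one_sub_mul_eq_inv_sub_mul {K m : Type*} [Field K] [Fintype m] [DecidableEq m]
    {A B : Matrix m m K} (hB : B.det ≠ 0) : 1 - A * B = (B⁻¹ - A) * B := by
  rw [sub_mul, nonsing_inv_mul _ hB.isUnit]

lemma eventually_forall_segment_det_ne_zero_near_jw (hP : IsNIRegular P) (hC : IsSNI C) {ω : ℝ}
    (hω : 0 < ω) : ∀ᶠ s in 𝓝[RHP] jw ω, ∀ X ∈ segment ℝ (evalMat P 0) (evalMat P s),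
      (1 - X * evalMat C s).det ≠ 0 := by
  obtain ⟨c, hc, hle⟩ := exists_pos_eventually_le_im_qf_inv_sub hP hC hω
  filter_upwards [hle, nhdsWithin_le_nhds (hC.eventually_im_qf_neg hω)] with s hs hCs X hX
  have hCdet : (evalMat C s).det ≠ 0 := det_ne_zero_of_im_qf_neg hCs
  rw [one_sub_mul_eq_inv_sub_mul hCdet, det_mul]
  exact mul_ne_zero (det_ne_zero_of_le_im_qf hc (hs X hX)) hCdet

theorem det_one_sub_evalMat_mul_ne_zero (hP : IsNIRegular P) (hC : IsSNI C)
    (hb : ∀ X ∈ segment ℝ (infMat P) (evalMat P 0), (1 - X * infMat C).det ≠ 0)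
    (hc : ∀ Y ∈ segment ℝ (infMat C) (evalMat C 0), (1 - Y * evalMat P 0).det ≠ 0) {s : ℂ}
    (hs : s ∈ RHP) : (1 - evalMat P s * evalMat C s).det ≠ 0 := by
  have hC' := hC.isNIRegular
  refine det_one_sub_mul_ne_zero_of_segment hP.differentiableOn_evalMat
    hC'.differentiableOn_evalMat (eventually_rhpBoundary ?_ ?_ (fun ω hω =>
      eventually_forall_segment_det_ne_zero_near_jw hP hC hω) fun ω hω => ?_)
    (fun s hs => det_one_sub_evalMat_zero_mul_ne_zero hP.isHermitian_evalMat_zero hC hc hs) hs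
  · refine (eventually_forall_segment_det_ne_zero (continuousAt_evalMat hP.regular_zero).tendsto
      (continuousAt_evalMat hC'.regular_zero).tendsto fun X hX => ?_).filter_mono nhdsWithin_le_nhds
    rw [segment_same] at hX
    rw [hX, det_one_sub_mul_comm]
    exact hc _ (right_mem_segment ..)
  · refine eventually_forall_segment_det_ne_zero (tendsto_evalMat_cobounded hP.proper)
      (tendsto_evalMat_cobounded hC'.proper) ?_
    rwa [segment_symm]
  · filter_upwards [eventually_forall_segment_det_ne_zero_near_jw hP hC hω] with s hs
    rw [evalMat_conj, evalMat_conj]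
    exact forall_segment_det_ne_zero_conj (evalMat_zero_map_conj P) hs

end Loop

section ClosedLoop

variable {K m : Type*} [Field K] [Fintype m] [DecidableEq m]

/-- The closed loop `[I; C] (I - P C)⁻¹ [I, P]` of the positive feedback interconnection. -/
def closedLoop (P C : Matrix m m K) : Matrix (m ⊕ m) (m ⊕ m) K :=
  fromBlocks (1 - P * C)⁻¹ ((1 - P * C)⁻¹ * P) (C * (1 - P * C)⁻¹) (C * (1 - P * C)⁻¹ * P)

variable {S : Subring K} {A B C D P : Matrix m m K}

lemma fromBlocks_mem_matrix (hA : A ∈ S.matrix) (hB : B ∈ S.matrix) (hC : C ∈ S.matrix)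
    (hD : D ∈ S.matrix) : fromBlocks A B C D ∈ S.matrix := by
  rintro (i | i) (j | j)
  exacts [hA i j, hB i j, hC i j, hD i j]

lemma IsResidueMap.closedLoop_mem {L : Type*} [Field L] {e : K → L} (he : IsResidueMap S e)
    (hP : P ∈ S.matrix) (hC : C ∈ S.matrix) (hdet : (1 - P.map e * C.map e).det ≠ 0) :
    closedLoop P C ∈ S.matrix := by
  have hV : (1 - P * C)⁻¹ ∈ S.matrix := he.matrix_inv_mem
    (S.matrix.sub_mem S.matrix.one_mem (S.matrix.mul_mem hP hC)) (by rwa [he.map_one_sub_mul hP hC])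
  exact fromBlocks_mem_matrix hV (S.matrix.mul_mem hV hP) (S.matrix.mul_mem hC hV)
    (S.matrix.mul_mem (S.matrix.mul_mem hC hV) hP)

-- `P` itself may have a pole at `jω`; it is eliminated in favour of `C⁻¹` and `(C⁻¹ - P)⁻¹`.
lemma closedLoop_mem_of_inv_mem (hC : C.det ≠ 0) (hPC : (1 - P * C).det ≠ 0)
    (hCinv : C⁻¹ ∈ S.matrix) (hW : (C⁻¹ - P)⁻¹ ∈ S.matrix) : closedLoop P C ∈ S.matrix := by
  have hV : (1 - P * C)⁻¹ = C⁻¹ * (C⁻¹ - P)⁻¹ := by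
    rw [one_sub_mul_eq_inv_sub_mul hC, Matrix.mul_inv_rev]
  have hWdet : (C⁻¹ - P).det ≠ 0 := fun h0 => hPC <| by
    rw [one_sub_mul_eq_inv_sub_mul hC, det_mul, h0, zero_mul]
  have hWP : (C⁻¹ - P)⁻¹ * P = (C⁻¹ - P)⁻¹ * C⁻¹ - 1 := by
    rw [← nonsing_inv_mul _ hWdet.isUnit, mul_sub, sub_sub_cancel]
  have hWP_mem : (C⁻¹ - P)⁻¹ * P ∈ S.matrix :=
    hWP ▸ S.matrix.sub_mem (S.matrix.mul_mem hW hCinv) S.matrix.one_mem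
  rw [closedLoop, hV, mul_nonsing_inv_cancel_left _ _ hC.isUnit, Matrix.mul_assoc]
  exact fromBlocks_mem_matrix (S.matrix.mul_mem hCinv hW) (S.matrix.mul_mem hCinv hWP_mem) hW
    hWP_mem

end ClosedLoop

section Sufficiency

variable {P C : Matrix (Fin n) (Fin n) (RatFunc ℝ)}

lemma evalMat_inv_sub_inv {s : ℂ} (hP : P ∈ (regularSubring s).matrix)
    (hC : C ∈ (regularSubring s).matrix) (hCdet : (evalMat C s).det ≠ 0)
    (hdet : ((evalMat C s)⁻¹ - evalMat P s).det ≠ 0) :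
    evalMat (C⁻¹ - P)⁻¹ s = ((evalMat C s)⁻¹ - evalMat P s)⁻¹ := by
  have he := isResidueMap_evalC s
  have hCinv := he.matrix_inv_mem hC hCdet
  have hsub : (C⁻¹ - P).map (evalC · s) = (evalMat C s)⁻¹ - evalMat P s := by
    rw [he.map_matrix_sub hCinv hP, he.map_matrix_inv hC hCdet]
    rfl
  rw [← hsub] at hdet ⊢
  exact he.map_matrix_inv (Subring.sub_mem _ hCinv hP) hdet

lemma closedLoop_mem_regularSubring_jw (hP : IsNIRegular P) (hC : IsSNI C)
    (hPC : (1 - P * C).det ≠ 0) {ω : ℝ} (hω : 0 < ω) :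
    closedLoop P C ∈ (regularSubring (jw ω)).matrix := by
  have hCjw : C ∈ (regularSubring (jw ω)).matrix := hC.1.2 _ (jw_re ω).ge
  have he := isResidueMap_evalC (jw ω)
  refine closedLoop_mem_of_inv_mem (he.det_ne_zero hCjw (hC.det_ne_zero hω)) hPC
    (he.matrix_inv_mem hCjw (hC.det_ne_zero hω)) fun i j => ?_
  obtain ⟨c, hc, hle⟩ := exists_pos_eventually_le_im_qf_inv_sub hP hC hω
  refine mem_regularSubring_of_norm_evalC_le (nhdsWithin_RHP_jw_le_nhdsNE ω) (b := c⁻¹) ?_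
  filter_upwards [hle, nhdsWithin_le_nhds (hC.eventually_im_qf_neg hω), self_mem_nhdsWithin]
    with s hs hCs hsR
  have hsP := hs _ (right_mem_segment ..)
  have heval := evalMat_inv_sub_inv (hP.regular_RHP s hsR) (hC.isNIRegular.regular_RHP s hsR)
    (det_ne_zero_of_im_qf_neg hCs) (det_ne_zero_of_le_im_qf hc hsP)
  change ‖evalMat (C⁻¹ - P)⁻¹ s i j‖ ≤ c⁻¹
  rw [heval]
  exact norm_inv_apply_le_of_le_norm_qf hc
    (fun x => (hsP x).trans ((le_abs_self _).trans (Complex.abs_im_le_norm _))) i j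

theorem feedbackStable_of_segment (hP : IsNIRegular P) (hC : IsSNI C)
    (hb : ∀ X ∈ segment ℝ (infMat P) (evalMat P 0), (1 - X * infMat C).det ≠ 0)
    (hc : ∀ Y ∈ segment ℝ (infMat C) (evalMat C 0), (1 - Y * evalMat P 0).det ≠ 0) :
    FeedbackStable P C := by
  have hC' := hC.isNIRegular
  have hinf := hb _ (left_mem_segment ..)
  have hPC : (1 - P * C).det ≠ 0 := isResidueMap_atInfinity.det_ne_zero
    (Subring.sub_mem _ (Subring.one_mem _) (Subring.mul_mem _ hP.proper hC'.proper))
    (by rwa [isResidueMap_atInfinity.map_one_sub_mul hP.proper hC'.proper])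
  refine ⟨hPC, isResidueMap_atInfinity.closedLoop_mem hP.proper hC'.proper hinf, fun s hs => ?_⟩
  change closedLoop P C ∈ (regularSubring s).matrix
  rcases hs.eq_or_lt with h0 | hpos
  · rw [eq_jw_of_re_eq_zero h0.symm]
    rcases lt_trichotomy s.im 0 with hω | hω | hω
    · rw [← regularSubring_conj, conj_jw]
      exact closedLoop_mem_regularSubring_jw hP hC hPC (neg_pos.2 hω)
    · rw [hω, jw_zero]
      refine (isResidueMap_evalC 0).closedLoop_mem hP.regular_zero hC'.regular_zero ?_
      rw [det_one_sub_mul_comm]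
      exact hc _ (right_mem_segment ..)
    · exact closedLoop_mem_regularSubring_jw hP hC hPC hω
  · exact (isResidueMap_evalC s).closedLoop_mem (hP.regular_RHP s hpos) (hC'.regular_RHP s hpos)
      (det_one_sub_evalMat_mul_ne_zero hP hC hb hc hpos)

end Sufficiency

/-! ### Necessity: the loop matrix -/

section LoopMatrix

variable {K m : Type*} [Field K] [Fintype m] [DecidableEq m]

/-- The matrix `[-P, I; I, -C]` of the loop equations. Up to a permutation of blocks and a constant,
its inverse is the closed loop. -/
def loopMatrix (P C : Matrix m m K) : Matrix (m ⊕ m) (m ⊕ m) K := fromBlocks (-P) 1 1 (-C)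

variable {S : Subring K} {P C : Matrix m m K}

lemma loopMatrix_mul_eq_one (hPC : (1 - P * C).det ≠ 0) :
    loopMatrix P C * fromBlocks (C * (1 - P * C)⁻¹) (1 + C * (1 - P * C)⁻¹ * P)
      (1 - P * C)⁻¹ ((1 - P * C)⁻¹ * P) = 1 := by
  set V := (1 - P * C)⁻¹
  have hV : V - P * (C * V) = 1 := by
    rw [← mul_nonsing_inv _ hPC.isUnit, sub_mul, one_mul, Matrix.mul_assoc]
  have hVP : V * P - P * (C * (V * P)) = P := by
    simpa only [sub_mul, one_mul, Matrix.mul_assoc] using congrArg (· * P) hV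
  rw [loopMatrix, fromBlocks_multiply, ← fromBlocks_one]
  congr 1
  · linear_combination (norm := noncomm_ring) hV
  · linear_combination (norm := noncomm_ring) hVP
  · noncomm_ring
  · noncomm_ring

lemma det_loopMatrix_ne_zero (hPC : (1 - P * C).det ≠ 0) : (loopMatrix P C).det ≠ 0 :=
  det_ne_zero_of_right_inverse (loopMatrix_mul_eq_one hPC)

lemma det_one_sub_mul_ne_zero_of_loopMatrix (h : (loopMatrix P C).det ≠ 0) :
    (1 - P * C).det ≠ 0 := fun h0 => by
  obtain ⟨v, hv, hv0⟩ := exists_mulVec_eq_zero_iff.2 h0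
  refine h (exists_mulVec_eq_zero_iff.1 ⟨Sum.elim (C *ᵥ v) v, fun hzero => hv ?_, ?_⟩)
  · simpa using congrArg (· ∘ Sum.inr) hzero
  · rw [sub_mulVec, one_mulVec] at hv0
    simp [loopMatrix, fromBlocks_mulVec, neg_mulVec, neg_add_eq_sub, hv0]

lemma inv_loopMatrix_mem (hPC : (1 - P * C).det ≠ 0) (h : closedLoop P C ∈ S.matrix) :
    (loopMatrix P C)⁻¹ ∈ S.matrix := by
  rw [inv_eq_right_inv (loopMatrix_mul_eq_one hPC)]
  exact fromBlocks_mem_matrix (fun i j => h (.inr i) (.inl j))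
    (S.matrix.add_mem S.matrix.one_mem fun i j => h (.inr i) (.inr j))
    (fun i j => h (.inl i) (.inl j)) fun i j => h (.inl i) (.inr j)

variable {L : Type*} [Field L] {e : K → L}

lemma IsResidueMap.map_loopMatrix (he : IsResidueMap S e) (hP : P ∈ S.matrix) (hC : C ∈ S.matrix) :
    (loopMatrix P C).map e = loopMatrix (P.map e) (C.map e) := by
  have hneg {A : Matrix m m K} (hA : A ∈ S.matrix) : (-A).map e = -A.map e := by
    ext i j
    exact he.toRingHom.map_neg ⟨A i j, hA i j⟩
  rw [loopMatrix, fromBlocks_map, hneg hP, hneg hC, he.map_matrix_one, loopMatrix]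

lemma IsResidueMap.map_inv_of_inv_mem {A : Matrix m m K} (he : IsResidueMap S e)
    (hA : A ∈ S.matrix) (hinv : A⁻¹ ∈ S.matrix) (hdet : A.det ≠ 0) :
    (A.map e).det ≠ 0 ∧ A⁻¹.map e = (A.map e)⁻¹ := by
  have hone : A.map e * A⁻¹.map e = 1 := by
    rw [← he.map_matrix_mul hA hinv, mul_nonsing_inv _ hdet.isUnit, he.map_matrix_one]
  exact ⟨det_ne_zero_of_right_inverse hone, (inv_eq_right_inv hone).symm⟩

lemma IsResidueMap.map_inv_loopMatrix (he : IsResidueMap S e) (hP : P ∈ S.matrix)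
    (hC : C ∈ S.matrix) (hPC : (1 - P * C).det ≠ 0) (h : closedLoop P C ∈ S.matrix) :
    (loopMatrix (P.map e) (C.map e)).det ≠ 0 ∧
      (loopMatrix P C)⁻¹.map e = (loopMatrix (P.map e) (C.map e))⁻¹ := by
  have hmem : loopMatrix P C ∈ S.matrix := fromBlocks_mem_matrix (S.matrix.neg_mem hP)
    S.matrix.one_mem S.matrix.one_mem (S.matrix.neg_mem hC)
  rw [← he.map_loopMatrix hP hC]
  exact he.map_inv_of_inv_mem hmem (inv_loopMatrix_mem hPC h) (det_loopMatrix_ne_zero hPC)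

end LoopMatrix

section LoopForm

variable {m : Type*} [DecidableEq m] {X X' Y Y' : Matrix m m ℂ}

lemma isHermitian_loopMatrix (hX : X.IsHermitian) (hY : Y.IsHermitian) :
    (loopMatrix X Y).IsHermitian :=
  hX.neg.fromBlocks conjTranspose_one hY.neg

variable [Fintype m]

lemma qf_loopMatrix (X Y : Matrix m m ℂ) (x : m ⊕ m → ℂ) :
    qf (loopMatrix X Y) x = (2 * (star (x ∘ Sum.inl) ⬝ᵥ x ∘ Sum.inr).re : ℝ) -
      qf X (x ∘ Sum.inl) - qf Y (x ∘ Sum.inr) := by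
  obtain ⟨u, w, rfl⟩ : ∃ u w, x = Sum.elim u w := ⟨_, _, (Sum.elim_comp_inl_inr x).symm⟩
  have hcross : ((2 * (star u ⬝ᵥ w).re : ℝ) : ℂ) = star u ⬝ᵥ w + star w ⬝ᵥ u := by
    rw [← Complex.add_conj, ← RCLike.star_def, star_dotProduct u]
    simp
  have hstar : star (Sum.elim u w) = Sum.elim (star u) (star w) := by
    ext (i | i) <;> rfl
  rw [qf, loopMatrix, fromBlocks_mulVec, hstar, sumElim_dotProduct_sumElim]
  simp only [Sum.elim_comp_inl, Sum.elim_comp_inr, neg_mulVec, one_mulVec, dotProduct_add,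
    dotProduct_neg, hcross, qf]
  ring

lemma imNonpos_inv_loopMatrix (hX : ImNonpos X) (hY : ImNonpos Y)
    (hdet : (loopMatrix X Y).det ≠ 0) : ImNonpos (loopMatrix X Y)⁻¹ := fun y => by
  rw [qf_inv hdet, qf_loopMatrix, RCLike.star_def, Complex.conj_im, Complex.sub_im, Complex.sub_im,
    Complex.ofReal_im]
  linarith [hX (((loopMatrix X Y)⁻¹ *ᵥ y) ∘ Sum.inl), hY (((loopMatrix X Y)⁻¹ *ᵥ y) ∘ Sum.inr)]

open scoped MatrixOrder in
lemma loopMatrix_le_loopMatrix (hX : X ≤ X') (hY : Y ≤ Y') :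
    loopMatrix X' Y' ≤ loopMatrix X Y := by
  refine posSemidef_of_qf_nonneg fun x => ?_
  rw [qf_sub, qf_loopMatrix, qf_loopMatrix]
  have h := add_nonneg (sub_nonneg.2 (qf_le_qf_of_le hX (x ∘ Sum.inl)))
    (sub_nonneg.2 (qf_le_qf_of_le hY (x ∘ Sum.inr)))
  exact h.trans_eq (by ring)

end LoopForm

section Necessity

variable {P C : Matrix (Fin n) (Fin n) (RatFunc ℝ)}

lemma imNonpos_evalMat_inv_loopMatrix (h : FeedbackStable P C) (hP : IsNIRegular P)
    (hC : IsNIRegular C) {ω : ℝ} (hω : 0 < ω) : ImNonpos (evalMat (loopMatrix P C)⁻¹ (jw ω)) := by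
  have hmem (θ : ℝ) : closedLoop P C ∈ (regularSubring (jw θ)).matrix := h.2.2 _ (jw_re θ).ge
  refine ImNonpos.of_tendsto ((continuousAt_evalMat (inv_loopMatrix_mem h.1 (hmem ω))).tendsto.comp
    ((tendsto_jw_nhdsNE ω).mono_right nhdsWithin_le_nhds)) ?_
  have hreg (G : Matrix (Fin n) (Fin n) (RatFunc ℝ)) :
      ∀ᶠ θ in 𝓝[≠] ω, G ∈ (regularSubring (jw θ)).matrix :=
    nhdsNE_le_cofinite ω <|
      jw_injective.tendsto_cofinite.eventually (eventually_mem_matrix_regularSubring G)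
  filter_upwards [hreg P, hreg C, nhdsWithin_le_nhds (eventually_gt_nhds hω)] with θ hPθ hCθ hθ
  obtain ⟨hdet, hinv⟩ := (isResidueMap_evalC (jw θ)).map_inv_loopMatrix hPθ hCθ h.1 (hmem θ)
  rw [Function.comp_apply, evalMat, hinv]
  exact imNonpos_inv_loopMatrix (hP.imNonpos θ hθ hPθ) (hC.imNonpos θ hθ hCθ) hdet

lemma isNIRegular_inv_loopMatrix (h : FeedbackStable P C) (hP : IsNIRegular P)
    (hC : IsNIRegular C) : IsNIRegular (loopMatrix P C)⁻¹ := by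
  have hreg (s : ℂ) (hs : 0 ≤ s.re) : (loopMatrix P C)⁻¹ ∈ (regularSubring s).matrix :=
    inv_loopMatrix_mem h.1 (h.2.2 s hs)
  exact
    { proper := inv_loopMatrix_mem h.1 h.2.1
      regular_RHP s hs := hreg s (le_of_lt hs)
      regular_zero := hreg 0 le_rfl
      imNonpos ω hω _ := imNonpos_evalMat_inv_loopMatrix h hP hC hω
      residue ω _ := ⟨0, .zero, tendsto_sub_smul_evalMat_of_regular (hreg _ (jw_re ω).ge)⟩ }

open scoped MatrixOrder in
theorem det_one_sub_mul_ne_zero_of_feedbackStable (h : FeedbackStable P C) (hP : IsNIRegular P)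
    (hC : IsNIRegular C) {X Y : Matrix (Fin n) (Fin n) ℂ}
    (hX : X ∈ segment ℝ (infMat P) (evalMat P 0)) (hY : Y ∈ segment ℝ (infMat C) (evalMat C 0)) :
    (1 - X * Y).det ≠ 0 := by
  have hX' := segment_subset_Icc hP.infMat_le_evalMat_zero hX
  have hY' := segment_subset_Icc hC.infMat_le_evalMat_zero hY
  obtain ⟨hdet₀, hinv₀⟩ := (isResidueMap_evalC 0).map_inv_loopMatrix hP.regular_zero
    hC.regular_zero h.1 (h.2.2 0 le_rfl)
  obtain ⟨hdet_inf, hinv_inf⟩ := isResidueMap_atInfinity.map_inv_loopMatrix hP.proper hC.proper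
    h.1 h.2.1
  have hle := (isNIRegular_inv_loopMatrix h hP hC).infMat_le_evalMat_zero
  rw [infMat, evalMat, hinv₀, hinv_inf] at hle
  exact det_one_sub_mul_ne_zero_of_loopMatrix <| det_ne_zero_of_le_of_le_of_inv_le
    (isHermitian_loopMatrix hP.isHermitian_evalMat_zero hC.isHermitian_evalMat_zero) hdet₀ hdet_inf
    (loopMatrix_le_loopMatrix hX'.2 hY'.2) (loopMatrix_le_loopMatrix hX'.1 hY'.1) hle

end Necessity

/-! ### The eigenvalue criterion -/

section Criterion

lemma det_one_sub_map_ofReal_ne_zero_iff {m : Type*} [Fintype m] [DecidableEq m]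
    {X Y : Matrix m m ℝ} :
    (1 - X.map Complex.ofReal * Y.map Complex.ofReal).det ≠ 0 ↔ (1 - X * Y).det ≠ 0 := by
  have hmap : 1 - X.map Complex.ofReal * Y.map Complex.ofReal =
      Complex.ofRealHom.mapMatrix (1 - X * Y) := by
    rw [map_sub, _root_.map_one, _root_.map_mul]
    rfl
  rw [hmap, ← RingHom.map_det, _root_.map_ne_zero]

lemma IsNIRegular.maxEigLT_zero_iff {G : Matrix (Fin n) (Fin n) (RatFunc ℝ)} (hG : IsNIRegular G)
    {Y : Matrix (Fin n) (Fin n) ℝ} (hY : (Y.map Complex.ofReal).IsHermitian)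
    (hdet : (1 - evalInf G * Y).det ≠ 0) :
    maxEigLT ((evalR G 0 * Y - 1) * (1 - evalInf G * Y)⁻¹) 0 ↔
      ∀ X ∈ segment ℝ (infMat G) (evalMat G 0), (1 - X * Y.map Complex.ofReal).det ≠ 0 := by
  have hmap : ((evalR G 0 * Y - 1) * (1 - evalInf G * Y)⁻¹).map Complex.ofReal =
      (evalMat G 0 * Y.map Complex.ofReal - 1) * (1 - infMat G * Y.map Complex.ofReal)⁻¹ := by
    change Complex.ofRealHom.mapMatrix _ = (_ * Complex.ofRealHom.mapMatrix Y - 1) *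
      (1 - Complex.ofRealHom.mapMatrix (evalInf G) * Complex.ofRealHom.mapMatrix Y)⁻¹
    have h₀ : evalMat G 0 = Complex.ofRealHom.mapMatrix (evalR G 0) := evalMat_zero G
    rw [h₀, _root_.map_mul, RingHom.mapMatrix_apply _ (_)⁻¹, map_inv_matrix,
      ← RingHom.mapMatrix_apply]
    simp only [map_sub, _root_.map_mul, _root_.map_one]
  rw [maxEigLT, hmap]
  exact eigsRealAndLT_zero_iff hG.isHermitian_infMat hG.infMat_le_evalMat_zero hY
    (det_one_sub_map_ofReal_ne_zero_iff.2 hdet)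

end Criterion

/-- feedback stability of an NI plant (no origin poles) with an
SNI controller, second set of necessary and sufficient conditions. -/
theorem feedback_stability_iff_v2 {n : ℕ} (P C : Matrix (Fin n) (Fin n) (RatFunc ℝ))
    (hP : IsNI P) (hP0 : ¬ HasPole P 0) (hC : IsSNI C) :
    FeedbackStable P C ↔
      ((1 - evalInf P * evalInf C).det ≠ 0 ∧
       maxEigLT ((evalR P 0 * evalInf C - 1) * (1 - evalInf P * evalInf C)⁻¹) 0 ∧
       maxEigLT ((evalR C 0 * evalR P 0 - 1) * (1 - evalInf C * evalR P 0)⁻¹) 0) := by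
  have hP' := hP.isNIRegular hP0
  have hC' := hC.isNIRegular
  have hb_iff := hP'.maxEigLT_zero_iff (Y := evalInf C) hC'.isHermitian_infMat
  have hc_iff := hC'.maxEigLT_zero_iff (evalMat_zero P ▸ hP'.isHermitian_evalMat_zero)
  rw [← evalMat_zero] at hc_iff
  have hc_det (h : (1 - evalMat P 0 * infMat C).det ≠ 0) :
      (1 - evalInf C * evalR P 0).det ≠ 0 := by
    rw [evalMat_zero, det_one_sub_mul_comm] at h
    exact det_one_sub_map_ofReal_ne_zero_iff.1 h
  constructor
  · intro h
    have hdet {X Y} := det_one_sub_mul_ne_zero_of_feedbackStable (X := X) (Y := Y) h hP' hC'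
    have ha := det_one_sub_map_ofReal_ne_zero_iff.1
      (hdet (left_mem_segment ..) (left_mem_segment ..))
    exact ⟨ha, (hb_iff ha).2 fun X hX => hdet hX (left_mem_segment ..),
      (hc_iff (hc_det (hdet (right_mem_segment ..) (left_mem_segment ..)))).2 fun Y hY =>
        det_one_sub_mul_comm Y _ ▸ hdet (right_mem_segment ..) hY⟩
  · rintro ⟨ha, hb, hc⟩
    have hb_seg := (hb_iff ha).1 hb
    exact feedbackStable_of_segment hP' hC hb_seg
      ((hc_iff (hc_det (hb_seg _ (right_mem_segment ..)))).1 hc)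

end NIControl
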